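/- arXiv:1807.00928 — 4 statements merged into one kernel-verified Lean document; each statement's English description precedes it below -/
import Mathlib

section
/- For every R > 0 and every ρ with R/2 ≤ ρ < e^{-1/2} R, there exists a constant C > 0, depending only on R and ρ, such that for every smooth subharmonic function ψ on the open disk B_R(0) ⊆ ℂ satisfying ψ(0) ≥ -1 and ψ ≤ 0 on B_R(0), one has ∫_{B_ρ(0)} e^{-ψ} dA ≤ C. -/
open MeasureTheory

/-- The Laplacian `Δf = ∂²f/∂x² + ∂²f/∂y²` of a function `f : ℂ → ℝ`, expressed via
iterated directional (Fréchet) derivatives in the directions `1` and `i`. -/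
noncomputable def laplacian (f : ℂ → ℝ) (z : ℂ) : ℝ :=
  fderiv ℝ (fun w => fderiv ℝ f w 1) z 1 +
    fderiv ℝ (fun w => fderiv ℝ f w Complex.I) z Complex.I

lemma lap_eq {ψ : ℂ → ℝ} {U : Set ℂ} (hU : IsOpen U) (h : ContDiffOn ℝ (⊤ : ℕ∞) ψ U) {w : ℂ}
    (hw : w ∈ U) : laplacian ψ w = fderiv ℝ (fderiv ℝ ψ) w 1 1
      + fderiv ℝ (fderiv ℝ ψ) w Complex.I Complex.I := by
  have h1 : ContDiffOn ℝ 1 (fderiv ℝ ψ) U := h.fderiv_of_isOpen hU (by norm_cast)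
  have hd : DifferentiableAt ℝ (fderiv ℝ ψ) w :=
    (h1.differentiableOn (by norm_num)).differentiableAt (hU.mem_nhds hw)
  unfold laplacian
  rw [fderiv_clm_apply hd (by fun_prop), fderiv_clm_apply hd (by fun_prop)]
  simp

lemma trace_inv (T : ℂ →L[ℝ] ℂ →L[ℝ] ℝ) (θ : ℝ) :
    T (Complex.exp (θ * Complex.I)) (Complex.exp (θ * Complex.I))
      + T (Complex.I * Complex.exp (θ * Complex.I)) (Complex.I * Complex.exp (θ * Complex.I))
      = T 1 1 + T Complex.I Complex.I := by
  have e1 : Complex.exp (θ * Complex.I) = (Real.cos θ) • (1:ℂ) + (Real.sin θ) • Complex.I := by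
    rw [Complex.exp_mul_I]; simp
  have e2 : Complex.I * Complex.exp (θ * Complex.I)
      = (-Real.sin θ) • (1:ℂ) + (Real.cos θ) • Complex.I := by
    rw [e1]; simp only [Complex.real_smul]; push_cast; ring_nf; simp; ring
  rw [e2, e1]
  simp only [map_add, map_smul, add_apply, smul_apply,
    smul_eq_mul]
  linear_combination (T 1 1 + T Complex.I Complex.I) * Real.sin_sq_add_cos_sq θ

lemma polar_ball (f : ℂ → ℝ) (z : ℂ) (δ : ℝ) :
    ∫ ζ in Metric.ball z δ, f ζ = ∫ p in Set.Ioo 0 δ ×ˢ Set.Ioo (-Real.pi) Real.pi,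
      p.1 * f (z + p.1 * Complex.exp (p.2 * Complex.I)) := by
  rw [← integral_indicator measurableSet_ball,
    ← integral_add_left_eq_self _ z, ← Complex.integral_comp_polarCoord_symm]
  rw [← integral_indicator (by exact polarCoord.open_target.measurableSet),
    ← integral_indicator (by measurability)]
  congr 1
  ext p
  change (Set.Ioi (0 : ℝ) ×ˢ Set.Ioo (-Real.pi) Real.pi).indicator _ p = _
  have e : Complex.polarCoord.symm p = p.1 * Complex.exp (p.2 * Complex.I) := by
    rw [Complex.polarCoord_symm_apply, Complex.exp_mul_I]; simp
  by_cases hp : 0 < p.1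
  · by_cases h2 : p.2 ∈ Set.Ioo (-Real.pi) Real.pi
    · have : (z + Complex.polarCoord.symm p ∈ Metric.ball z δ) ↔ p.1 < δ := by
        rw [e]; simp [Complex.norm_exp_ofReal_mul_I, abs_of_pos hp]
      by_cases h3 : p.1 < δ
      · rw [Set.indicator_of_mem (by exact ⟨hp, h2⟩), Set.indicator_of_mem (this.2 h3),
          Set.indicator_of_mem (by exact ⟨⟨hp, h3⟩, h2⟩), e, smul_eq_mul]
      · rw [Set.indicator_of_mem (by exact ⟨hp, h2⟩), Set.indicator_of_notMem (fun h => h3 (this.1 h)),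
          Set.indicator_of_notMem (fun h => h3 h.1.2), smul_zero]
    · rw [Set.indicator_of_notMem (fun h => h2 h.2), Set.indicator_of_notMem (fun h => h2 h.2)]
  · rw [Set.indicator_of_notMem (fun h => hp h.1), Set.indicator_of_notMem (fun h => hp h.1.1)]

lemma jensen_sub {μ : Measure ℂ} {w g : ℂ → ℝ} (hw0 : ∀ᵐ x ∂μ, 0 ≤ w x) (hw : Integrable w μ)
    (hg : Integrable (fun x => g x * w x) μ) (he : Integrable (fun x => Real.exp (g x) * w x) μ)
    (h1 : ∫ x, w x ∂μ ≤ 1) :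
    Real.exp (∫ x, g x * w x ∂μ) ≤ 1 + ∫ x, Real.exp (g x) * w x ∂μ := by
  set y := ∫ x, g x * w x ∂μ with hy
  set a := ∫ x, w x ∂μ with ha
  have ha0 : 0 ≤ a := integral_nonneg_of_ae hw0
  have key : ∫ x, Real.exp y * ((1 - y) * w x + g x * w x) ∂μ ≤ ∫ x, Real.exp (g x) * w x ∂μ := by
    apply integral_mono_ae (((hw.const_mul _).add hg).const_mul _) he
    filter_upwards [hw0] with x hx
    have : Real.exp (g x) = Real.exp y * Real.exp (g x - y) := by
      rw [← Real.exp_add]; ring_nf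
    have h2 := Real.add_one_le_exp (g x - y)
    rw [this]
    have h3 := mul_le_mul_of_nonneg_left (mul_le_mul_of_nonneg_right h2 hx) (Real.exp_pos y).le
    simp only [Pi.add_apply]
    nlinarith
  rw [integral_const_mul, integral_add (hw.const_mul _) hg, integral_const_mul, ← hy, ← ha] at key
  have h4 : Real.exp y * (1 - y) ≤ 1 := by
    have := Real.add_one_le_exp (-y)
    have h5 : Real.exp y * Real.exp (-y) = 1 := by rw [← Real.exp_add]; simp
    nlinarith [Real.exp_pos y]
  have h6 : (1 - a) * (Real.exp y * (1 - y)) ≤ 1 := by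
    nlinarith [mul_le_mul_of_nonneg_left h4 (by linarith : 0 ≤ 1 - a)]
  nlinarith

set_option maxHeartbeats 1600000 in
lemma green {ψ : ℂ → ℝ} {R : ℝ} (h : ContDiffOn ℝ (⊤ : ℕ∞) ψ (Metric.ball (0 : ℂ) R))
    {z : ℂ} {δ : ℝ} (hδ : 0 < δ) (hsub : Metric.closedBall z δ ⊆ Metric.ball (0 : ℂ) R) (c : ℝ) :
    ∫ ζ in Metric.ball z δ, (Real.log δ - Real.log ‖ζ - z‖ - c * (δ ^ 2 - ‖ζ - z‖ ^ 2) / (2 * δ ^ 2))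
        * laplacian ψ ζ
      = - (2 * Real.pi * ψ z)
        + (1 - c) * (∫ θ in Set.Ioo (-Real.pi) Real.pi, ψ (z + δ * Complex.exp (θ * Complex.I)))
        + 2 * c / δ ^ 2 * ∫ ζ in Metric.ball z δ, ψ ζ := by
  set U := Metric.ball (0 : ℂ) R with hU
  have hUo : IsOpen U := Metric.isOpen_ball
  set D := fderiv ℝ ψ with hD
  set D2 := fderiv ℝ D with hD2
  have h1 : ContDiffOn ℝ 1 D U := h.fderiv_of_isOpen hUo (by norm_cast)
  have hψd : ∀ w ∈ U, HasFDerivAt ψ (D w) w := fun w hw =>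
    ((h.differentiableOn (by simp)).differentiableAt (hUo.mem_nhds hw)).hasFDerivAt
  have hDd : ∀ w ∈ U, HasFDerivAt D (D2 w) w := fun w hw =>
    ((h1.differentiableOn (by norm_num)).differentiableAt (hUo.mem_nhds hw)).hasFDerivAt
  have hψc : ContinuousOn ψ U := h.continuousOn
  have hDc : ContinuousOn D U := h1.continuousOn
  have hD2c : ContinuousOn D2 U := h1.continuousOn_fderiv_of_isOpen hUo le_rfl
  set W : ℝ × ℝ → ℂ := fun p => z + p.1 * Complex.exp (p.2 * Complex.I) with hW
  set e : ℝ → ℂ := fun θ => Complex.exp (θ * Complex.I) with he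
  have hWc : Continuous W := by fun_prop
  have hec : Continuous e := by fun_prop
  set Q := Set.Icc 0 δ ×ˢ Set.Icc (-Real.pi) Real.pi with hQ
  set S := Set.Ioo 0 δ ×ˢ Set.Ioo (-Real.pi) Real.pi with hS
  have hSm : MeasurableSet S := by measurability
  have hQc : IsCompact Q := isCompact_Icc.prod isCompact_Icc
  have hSQ : S ⊆ Q := Set.prod_mono Set.Ioo_subset_Icc_self Set.Ioo_subset_Icc_self
  have hWU' : ∀ s ∈ Set.Icc 0 δ, ∀ θ : ℝ, W (s, θ) ∈ U := by
    intro s hs θ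
    apply hsub
    simp [W, Complex.norm_exp_ofReal_mul_I, abs_of_nonneg hs.1, hs.2]
  have hWU : Set.MapsTo W Q U := fun p hp => hWU' p.1 hp.1 p.2
  set k : ℝ → ℝ := fun s => Real.log δ - Real.log s - c * (δ ^ 2 - s ^ 2) / (2 * δ ^ 2) with hk
  have hki : IntegrableOn k (Set.Icc 0 δ) := by
    have : IntervalIntegrable k volume 0 δ := by
      refine IntervalIntegrable.sub (IntervalIntegrable.sub (by simp) ?_) ?_
      · exact intervalIntegral.intervalIntegrable_log'
      · apply Continuous.intervalIntegrable; fun_prop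
    rwa [intervalIntegrable_iff_integrableOn_Icc_of_le hδ.le] at this
  have hkQ : IntegrableOn (fun p : ℝ × ℝ => k p.1) Q := by
    have := Integrable.mul_prod (L := ℝ) (f := k) (g := fun _ : ℝ => (1:ℝ)) hki
      (integrable_const (μ := volume.restrict (Set.Icc (-Real.pi) Real.pi)) (1:ℝ))
    rw [Measure.prod_restrict] at this
    simp only [mul_one] at this
    exact this
  have hψW : ContinuousOn (fun p => ψ (W p)) Q := hψc.comp hWc.continuousOn hWU
  have hDW : ContinuousOn (fun p => D (W p)) Q := hDc.comp hWc.continuousOn hWU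
  have hD2W : ContinuousOn (fun p => D2 (W p)) Q := hD2c.comp hWc.continuousOn hWU
  have he2 : ContinuousOn (fun p : ℝ × ℝ => e p.2) Q := by fun_prop
  have hie2 : ContinuousOn (fun p : ℝ × ℝ => Complex.I * e p.2) Q := by fun_prop
  set A : ℝ × ℝ → ℝ := fun p => k p.1 * (D (W p) (e p.2) + p.1 * D2 (W p) (e p.2) (e p.2)) with hA
  set B : ℝ × ℝ → ℝ := fun p => k p.1 * (p.1 * D2 (W p) (Complex.I * e p.2) (Complex.I * e p.2)
    - D (W p) (e p.2)) with hB
  set C : ℝ × ℝ → ℝ := fun p => 2 * c / δ ^ 2 * (p.1 * ψ (W p)) with hC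
  have hAi : IntegrableOn A Q := by
    apply hkQ.mul_continuousOn _ hQc
    exact (hDW.clm_apply he2).add (continuousOn_fst.mul ((hD2W.clm_apply he2).clm_apply he2))
  have hBi : IntegrableOn B Q := by
    apply hkQ.mul_continuousOn _ hQc
    exact (continuousOn_fst.mul ((hD2W.clm_apply hie2).clm_apply hie2)).sub (hDW.clm_apply he2)
  have hCi : IntegrableOn C Q :=
    (continuousOn_const.mul (continuousOn_fst.mul hψW)).integrableOn_compact hQc
  have hLHS : ∫ ζ in Metric.ball z δ, (Real.log δ - Real.log ‖ζ - z‖ - c * (δ ^ 2 - ‖ζ - z‖ ^ 2) / (2 * δ ^ 2))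
        * laplacian ψ ζ = ∫ p in S, ((A p - C p) + (B p + C p)) := by
    rw [polar_ball]
    apply setIntegral_congr_fun hSm
    intro p hp
    have hn : ‖z + p.1 * Complex.exp (p.2 * Complex.I) - z‖ = p.1 := by
      simp [Complex.norm_exp_ofReal_mul_I, abs_of_pos hp.1.1]
    simp only []
    rw [hn, lap_eq hUo h (hWU (hSQ hp))]
    have := trace_inv (D2 (W p)) p.2
    rw [← this]
    simp only [hA, hB, hC, hk, he]
    ring
  have hCint : ∫ p in S, C p = 2 * c / δ ^ 2 * ∫ ζ in Metric.ball z δ, ψ ζ := by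
    rw [polar_ball, ← integral_const_mul]
  have hB0 : ∫ p in S, B p = 0 := by
    rw [hS, Measure.volume_eq_prod, setIntegral_prod _ (hBi.mono_set hSQ)]
    apply setIntegral_eq_zero_of_forall_eq_zero
    intro s hs
    have hs' : s ∈ Set.Icc 0 δ := ⟨hs.1.le, hs.2.le⟩
    simp only [hB]
    rw [integral_const_mul, ← integral_Ioc_eq_integral_Ioo,
      ← intervalIntegral.integral_of_le (by linarith [Real.pi_pos])]
    have hd : ∀ θ : ℝ, HasDerivAt (fun θ : ℝ => D (W (s, θ)) (Complex.I * e θ))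
        (s * D2 (W (s, θ)) (Complex.I * e θ) (Complex.I * e θ) - D (W (s, θ)) (e θ)) θ := by
      intro θ
      have d1 : HasDerivAt e (Complex.I * e θ) θ := by
        have := ((Complex.ofRealCLM.hasDerivAt (x := θ)).mul_const Complex.I).cexp
        simpa [he, mul_comm] using this
      have d2 : HasDerivAt (fun θ => W (s, θ)) (s * (Complex.I * e θ)) θ := by
        simpa [hW] using (d1.const_mul (s:ℂ)).const_add z
      have d3 := (hDd _ (hWU' s hs' θ)).comp_hasDerivAt θ d2
      have d4 := d3.clm_apply (d1.const_mul Complex.I)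
      refine d4.congr_deriv ?_
      have : (s:ℂ) * (Complex.I * e θ) = s • (Complex.I * e θ) := by simp
      have h' : Complex.I * (Complex.I * e θ) = - e θ := by
        rw [← mul_assoc, Complex.I_mul_I]; simp
      rw [this, h', map_smul, map_neg]
      simp
      ring
    rw [intervalIntegral.integral_eq_sub_of_hasDerivAt (fun θ _ => hd θ)]
    · have : e Real.pi = e (-Real.pi) := by
        simp [he, Complex.exp_neg, Complex.exp_pi_mul_I]
      have h2 : W (s, Real.pi) = W (s, -Real.pi) := by
        simp only [hW]
        have := this
        simp only [he] at this
        rw [this]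
      rw [this, h2]; simp
    · apply ContinuousOn.intervalIntegrable
      rw [Set.uIcc_of_le (by linarith [Real.pi_pos])]
      have hc1 : ContinuousOn (fun θ : ℝ => ((s, θ) : ℝ × ℝ)) (Set.Icc (-Real.pi) Real.pi) := by fun_prop
      have hm : Set.MapsTo (fun θ : ℝ => ((s, θ) : ℝ × ℝ)) (Set.Icc (-Real.pi) Real.pi) Q :=
        fun θ hθ => ⟨hs', hθ⟩
      exact ((continuousOn_fst.mul ((hD2W.clm_apply hie2).clm_apply hie2)).sub
        (hDW.clm_apply he2)).comp hc1 hm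
  have hAC : ∫ p in S, (A p - C p) = ∫ θ in Set.Ioo (-Real.pi) Real.pi,
      ((1 - c) * ψ (W (δ, θ)) - ψ z) := by
    have hi := (hAi.sub hCi).mono_set hSQ
    have hi' := hi
    rw [IntegrableOn, Measure.volume_eq_prod, hS, ← Measure.prod_restrict] at hi
    rw [Measure.volume_eq_prod, hS, ← Measure.prod_restrict]
    refine (integral_prod_symm _ hi).trans ?_
    apply setIntegral_congr_fun measurableSet_Ioo
    intro θ hθ
    have hθ' : θ ∈ Set.Icc (-Real.pi) Real.pi := ⟨hθ.1.le, hθ.2.le⟩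
    have hc1 : ContinuousOn (fun s : ℝ => ((s, θ) : ℝ × ℝ)) (Set.Icc 0 δ) := by fun_prop
    have hm : Set.MapsTo (fun s : ℝ => ((s, θ) : ℝ × ℝ)) (Set.Icc 0 δ) Q :=
        fun s hs => ⟨hs, hθ'⟩
    have cψ := hψW.comp hc1 hm
    have cD := (hDW.clm_apply he2).comp hc1 hm
    have cD2 := ((hD2W.clm_apply he2).clm_apply he2).comp hc1 hm
    simp only [Function.comp_def] at cψ cD cD2
    change ∫ s in Set.Ioo 0 δ, (A (s, θ) - C (s, θ)) = _
    rw [← integral_Ioc_eq_integral_Ioo, ← intervalIntegral.integral_of_le hδ.le]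
    have d2 : ∀ s : ℝ, HasDerivAt (fun s : ℝ => W (s, θ)) (e θ) s := by
      intro s
      have := ((Complex.ofRealCLM.hasDerivAt (x := s)).mul_const (e θ)).const_add z
      simpa [hW, he] using this
    let F : ℝ → ℝ := fun s => (s * Real.log δ - s * Real.log s - c * s * (δ ^ 2 - s ^ 2) / (2 * δ ^ 2))
      * D (W (s, θ)) (e θ) + (1 - c * s ^ 2 / δ ^ 2) * ψ (W (s, θ))
    have := intervalIntegral.integral_eq_sub_of_hasDerivAt_of_le (f := F)
      (f' := fun s => A (s, θ) - C (s, θ)) hδ.le ?_ ?_ ?_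
    · rw [this]
      simp only [F]
      have : W (0, θ) = z := by simp [hW]
      rw [this]
      field_simp
      ring
    · have : ContinuousOn (fun s => s * Real.log s) (Set.Icc 0 δ) := Real.continuous_mul_log.continuousOn
      have l1 : ContinuousOn (fun s => s * Real.log δ) (Set.Icc 0 δ) := by fun_prop
      have l2 : ContinuousOn (fun s => c * s * (δ ^ 2 - s ^ 2) / (2 * δ ^ 2)) (Set.Icc 0 δ) := by fun_prop
      have l3 : ContinuousOn (fun s => (1 - c * s ^ 2 / δ ^ 2)) (Set.Icc 0 δ) := by fun_prop
      exact (((l1.sub this).sub l2).mul cD).add (l3.mul cψ)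
    · intro s hs
      have hs' : s ∈ Set.Icc 0 δ := ⟨hs.1.le, hs.2.le⟩
      have d3 := (hψd _ (hWU' s hs' θ)).comp_hasDerivAt s (d2 s)
      have d4 := ((hDd _ (hWU' s hs' θ)).comp_hasDerivAt s (d2 s)).clm_apply (hasDerivAt_const s (e θ))
      have l1 : HasDerivAt (fun s => s * Real.log s) (Real.log s + 1) s := Real.hasDerivAt_mul_log hs.1.ne'
      have l0 : HasDerivAt (fun s => s * Real.log δ) (Real.log δ) s := by
        simpa using (hasDerivAt_id s).mul_const (Real.log δ)
      have l2 : HasDerivAt (fun s => c * s * (δ ^ 2 - s ^ 2) / (2 * δ ^ 2))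
          (c * (δ ^ 2 - 3 * s ^ 2) / (2 * δ ^ 2)) s := by
        have := ((((hasDerivAt_id s).const_mul c).mul (((hasDerivAt_id s).pow 2).const_sub (δ ^ 2)))).div_const (2 * δ ^ 2)
        refine this.congr_deriv ?_
        simp; ring
      have l3 : HasDerivAt (fun s => (1 - c * s ^ 2 / δ ^ 2)) (- (2 * c * s / δ ^ 2)) s := by
        have := ((((hasDerivAt_id s).pow 2).const_mul c).div_const (δ ^ 2)).const_sub 1
        refine this.congr_deriv ?_
        simp; ring
      have := (((l0.sub l1).sub l2).mul d4).add (l3.mul d3)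
      refine this.congr_deriv ?_
      simp [hA, hC, hk]
      field_simp
      ring
    · rw [intervalIntegrable_iff_integrableOn_Icc_of_le hδ.le]
      refine IntegrableOn.sub ?_ ?_
      · exact hki.mul_continuousOn (cD.add (continuousOn_id.mul cD2)) isCompact_Icc
      · exact (continuousOn_const.mul (continuousOn_id.mul cψ)).integrableOn_compact isCompact_Icc
  have i1 : IntegrableOn (fun p => A p - C p) S := (hAi.sub hCi).mono_set hSQ
  have i2 : IntegrableOn (fun p => B p + C p) S := (hBi.add hCi).mono_set hSQ
  rw [hLHS, integral_add i1 i2,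
    integral_add (hBi.mono_set hSQ) (hCi.mono_set hSQ), hB0, hCint, hAC, integral_sub]
  · rw [integral_const_mul]
    simp
    rw [max_eq_left (by linarith [Real.pi_pos])]
    ring
  · apply IntegrableOn.mono_set (t := Set.Icc (-Real.pi) Real.pi) _ Set.Ioo_subset_Icc_self
    refine ContinuousOn.integrableOn_compact isCompact_Icc ?_
    have hc1 : ContinuousOn (fun θ : ℝ => ((δ, θ) : ℝ × ℝ)) (Set.Icc (-Real.pi) Real.pi) := by fun_prop
    have hm : Set.MapsTo (fun θ : ℝ => ((δ, θ) : ℝ × ℝ)) (Set.Icc (-Real.pi) Real.pi) Q :=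
        fun θ hθ => ⟨⟨hδ.le, le_rfl⟩, hθ⟩
    exact continuousOn_const.mul (hψW.comp hc1 hm)
  · simp

lemma lap_cont {ψ : ℂ → ℝ} {U : Set ℂ} (hU : IsOpen U) (h : ContDiffOn ℝ (⊤ : ℕ∞) ψ U) :
    ContinuousOn (laplacian ψ) U := by
  have h1 : ContDiffOn ℝ 1 (fderiv ℝ ψ) U := h.fderiv_of_isOpen hU (by norm_cast)
  have h2 : ContinuousOn (fderiv ℝ (fderiv ℝ ψ)) U := h1.continuousOn_fderiv_of_isOpen hU le_rfl
  have h3 : ContinuousOn (fun w => fderiv ℝ (fderiv ℝ ψ) w 1 1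
      + fderiv ℝ (fderiv ℝ ψ) w Complex.I Complex.I) U :=
    ((h2.clm_apply continuousOn_const).clm_apply continuousOn_const).add
      ((h2.clm_apply continuousOn_const).clm_apply continuousOn_const)
  exact h3.congr fun w hw => lap_eq hU h hw

lemma lap_meas (ψ : ℂ → ℝ) : Measurable (laplacian ψ) := by
  unfold laplacian
  exact (measurable_fderiv_apply_const ℝ _ _).add (measurable_fderiv_apply_const ℝ _ _)

lemma intOn_translate {f : ℂ → ℝ} {r : ℝ} (hf : IntegrableOn f (Metric.ball 0 r)) (z : ℂ) :
    IntegrableOn (fun ζ => f (ζ - z)) (Metric.ball z r) := by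
  have := ((measurePreserving_sub_right (volume : Measure ℂ) z).integrableOn_comp_preimage
    (measurableEmbedding_subRight z) (f := f) (s := Metric.ball 0 r)).2 hf
  have e : Metric.ball z r = (fun x => x - z) ⁻¹' Metric.ball 0 r := by
    ext x
    rw [Set.mem_preimage, Metric.mem_ball, Metric.mem_ball, dist_eq_norm, dist_zero_right]
  rw [e]
  exact this

lemma intOn_rpow {m : ℝ} (hm : m < 2) (δ : ℝ) (hδ : 0 < δ) (r : ℝ) :
    IntegrableOn (fun x : ℂ => 1 + (δ / ‖x‖) ^ m) (Metric.ball 0 r) := by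
  refine Integrable.add ?_ ?_
  · exact integrableOn_const (measure_ball_lt_top (μ := (volume : Measure ℂ))).ne
  · apply integrableOn_ball_of_norm_le_rpow (C := δ ^ m) (α := m)
    · simpa [Complex.finrank_real_complex] using hm
    · refine Filter.Eventually.of_forall fun x => ?_
      rw [Real.norm_of_nonneg (by positivity), Real.div_rpow hδ.le (norm_nonneg _),
        Real.rpow_neg (norm_nonneg _), div_eq_mul_inv]
    · apply Measurable.aestronglyMeasurable; fun_prop
    · simp [Complex.finrank_real_complex]

lemma intOn_log (r : ℝ) :
    IntegrableOn (fun x : ℂ => Real.log ‖x‖) (Metric.ball 0 r) := by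
  apply integrableOn_ball_of_norm_le_rpow (C := 1 + r ^ 2) (α := 1)
  · simp [Complex.finrank_real_complex]
  · filter_upwards [ae_restrict_mem measurableSet_ball,
      ae_restrict_of_ae ((Set.countable_singleton (0:ℂ)).ae_notMem volume)] with x hx hx0
    have h0 : 0 < ‖x‖ := norm_pos_iff.2 hx0
    have hxr : ‖x‖ < r := by simpa using hx
    rw [Real.rpow_neg_one, Real.norm_eq_abs, abs_le]
    have a1 : Real.log ‖x‖ ≤ ‖x‖ := by linarith [Real.log_le_sub_one_of_pos h0]
    have a2 := Real.one_sub_inv_le_log_of_pos h0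
    have a3 : ‖x‖ ≤ r ^ 2 * ‖x‖⁻¹ := by
      rw [← div_eq_mul_inv, le_div_iff₀ h0]; nlinarith
    have a4 : 0 < ‖x‖⁻¹ := inv_pos.2 h0
    have a5 : 0 ≤ r ^ 2 * ‖x‖⁻¹ := by positivity
    constructor <;> nlinarith
  · apply Measurable.aestronglyMeasurable; fun_prop
  · simp [Complex.finrank_real_complex]

lemma kernel_int {ψ : ℂ → ℝ} {R : ℝ} (h : ContDiffOn ℝ (⊤ : ℕ∞) ψ (Metric.ball (0 : ℂ) R))
    {z : ℂ} {δ : ℝ} (hsub : Metric.closedBall z δ ⊆ Metric.ball (0 : ℂ) R) (c : ℝ) :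
    IntegrableOn (fun ζ => (Real.log δ - Real.log ‖ζ - z‖ - c * (δ ^ 2 - ‖ζ - z‖ ^ 2) / (2 * δ ^ 2))
        * laplacian ψ ζ) (Metric.ball z δ) := by
  have hc := (lap_cont Metric.isOpen_ball h).mono hsub
  have hK := isCompact_closedBall z δ
  refine IntegrableOn.mono_set ?_ Metric.ball_subset_closedBall
  refine IntegrableOn.mul_continuousOn ?_ hc hK
  refine Integrable.sub (Integrable.sub ?_ ?_) ?_
  · exact (continuousOn_const).integrableOn_compact hK
  · exact (intOn_translate (intOn_log (δ + 1)) z).mono_set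
      (Metric.closedBall_subset_ball (by linarith))
  · refine ContinuousOn.integrableOn_compact hK ?_
    fun_prop

lemma mass_bound {ψ : ℂ → ℝ} {R : ℝ} (h : ContDiffOn ℝ (⊤ : ℕ∞) ψ (Metric.ball (0 : ℂ) R))
    (hl : ∀ z ∈ Metric.ball (0 : ℂ) R, 0 ≤ laplacian ψ z) (h0 : -1 ≤ ψ 0)
    (hn : ∀ z ∈ Metric.ball (0 : ℂ) R, ψ z ≤ 0) {t r : ℝ} (ht : 0 < t) (htr : t < r) (hr : r < R) :
    Real.log (r / t) * ∫ ζ in Metric.ball (0:ℂ) t, laplacian ψ ζ ≤ 2 * Real.pi := by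
  have hr0 : 0 < r := ht.trans htr
  have hsub : Metric.closedBall (0:ℂ) r ⊆ Metric.ball 0 R := Metric.closedBall_subset_ball hr
  have g := green h hr0 hsub 0
  have gi := kernel_int h hsub 0
  have hθ : ∫ θ in Set.Ioo (-Real.pi) Real.pi, ψ (0 + r * Complex.exp (θ * Complex.I)) ≤ 0 := by
    apply integral_nonpos
    intro θ
    apply hn
    apply hsub
    simp [Complex.norm_exp_ofReal_mul_I, abs_of_pos hr0]
  have hne := ((Set.countable_singleton (0:ℂ)).ae_notMem volume)
  rw [← integral_const_mul]
  calc _ ≤ ∫ ζ in Metric.ball (0:ℂ) t, (Real.log r - Real.log ‖ζ - 0‖ - 0 * (r ^ 2 - ‖ζ - 0‖ ^ 2) / (2 * r ^ 2))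
        * laplacian ψ ζ := by
        apply integral_mono_ae
        · exact ((((lap_cont Metric.isOpen_ball h).mono hsub).integrableOn_compact
            (isCompact_closedBall _ _)).mono_set (t := Metric.closedBall (0:ℂ) r)
            ((Metric.ball_subset_ball htr.le).trans Metric.ball_subset_closedBall)).const_mul _
        · exact gi.mono_set (Metric.ball_subset_ball htr.le)
        · filter_upwards [ae_restrict_mem measurableSet_ball, ae_restrict_of_ae hne] with x hx hx0
          have hp : 0 < ‖x‖ := norm_pos_iff.2 hx0
          have hxr : ‖x‖ < t := by simpa using hx
          have := Real.log_le_log hp hxr.le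
          apply mul_le_mul_of_nonneg_right _ (hl x (Metric.ball_subset_ball (htr.trans hr).le hx))
          rw [Real.log_div hr0.ne' ht.ne', sub_zero, zero_mul, zero_div]
          linarith
    _ ≤ ∫ ζ in Metric.ball (0:ℂ) r, (Real.log r - Real.log ‖ζ - 0‖ - 0 * (r ^ 2 - ‖ζ - 0‖ ^ 2) / (2 * r ^ 2))
        * laplacian ψ ζ := by
        apply setIntegral_mono_set gi
        · filter_upwards [ae_restrict_mem measurableSet_ball, ae_restrict_of_ae hne] with x hx hx0
          have hp : 0 < ‖x‖ := norm_pos_iff.2 hx0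
          have hxr : ‖x‖ < r := by simpa using hx
          have := Real.log_le_log hp hxr.le
          apply mul_nonneg _ (hl x (Metric.ball_subset_ball hr.le hx))
          simp; exact this
        · exact (Metric.ball_subset_ball htr.le).eventuallyLE
    _ ≤ _ := by
        rw [g]
        have := mul_le_mul_of_nonneg_left h0 (by positivity : 0 ≤ 2 * Real.pi)
        simp only [sub_zero, one_mul, mul_zero, zero_div, zero_mul, add_zero]
        linarith

lemma ker_nonneg {x δ : ℝ} (hx : 0 < x) (hδ : 0 < δ) :
    0 ≤ Real.log δ - Real.log x - 1 * (δ ^ 2 - x ^ 2) / (2 * δ ^ 2) := by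
  have := Real.one_sub_inv_le_log_of_pos (show 0 < (δ / x) ^ 2 by positivity)
  rw [Real.log_pow, Real.log_div hδ.ne' hx.ne'] at this
  have e : 1 * (δ ^ 2 - x ^ 2) / (2 * δ ^ 2) = (1 - ((δ / x) ^ 2)⁻¹) / 2 := by
    field_simp
  rw [e]
  push_cast at this
  linarith

lemma l1_bound {ψ : ℂ → ℝ} {R : ℝ} (h : ContDiffOn ℝ (⊤ : ℕ∞) ψ (Metric.ball (0 : ℂ) R))
    (hl : ∀ z ∈ Metric.ball (0 : ℂ) R, 0 ≤ laplacian ψ z) (h0 : -1 ≤ ψ 0)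
    {r : ℝ} (hr0 : 0 < r) (hr : r < R) :
    -(Real.pi * r ^ 2) ≤ ∫ ζ in Metric.ball (0:ℂ) r, ψ ζ := by
  have hsub : Metric.closedBall (0:ℂ) r ⊆ Metric.ball 0 R := Metric.closedBall_subset_ball hr
  have g := green h hr0 hsub 1
  have hne := ((Set.countable_singleton (0:ℂ)).ae_notMem volume)
  have hp : 0 ≤ ∫ ζ in Metric.ball (0:ℂ) r, (Real.log r - Real.log ‖ζ - 0‖ - 1 * (r ^ 2 - ‖ζ - 0‖ ^ 2) / (2 * r ^ 2))
        * laplacian ψ ζ := by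
    apply integral_nonneg_of_ae
    filter_upwards [ae_restrict_mem measurableSet_ball, ae_restrict_of_ae hne] with x hx hx0
    apply mul_nonneg _ (hl x (Metric.ball_subset_ball hr.le hx))
    apply ker_nonneg _ hr0
    rw [sub_zero]
    exact norm_pos_iff.2 hx0
  rw [g] at hp
  set J := ∫ ζ in Metric.ball (0:ℂ) r, ψ ζ
  have h3 : -(2 * Real.pi) ≤ 2 * 1 / r ^ 2 * J := by nlinarith [Real.pi_pos]
  have h4 : 2 * 1 / r ^ 2 * J = 2 * J / r ^ 2 := by ring
  rw [h4, le_div_iff₀ (by positivity)] at h3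
  linarith

lemma point_bound {ψ : ℂ → ℝ} {R : ℝ} (h : ContDiffOn ℝ (⊤ : ℕ∞) ψ (Metric.ball (0 : ℂ) R))
    (hl : ∀ z ∈ Metric.ball (0 : ℂ) R, 0 ≤ laplacian ψ z) (h0 : -1 ≤ ψ 0)
    (hn : ∀ z ∈ Metric.ball (0 : ℂ) R, ψ z ≤ 0) {t δ : ℝ} (ht0 : 0 < t) (ht : t < R) (hδ : 0 < δ)
    {z : ℂ} (hz : ‖z‖ + δ < t)
    (hgi : IntegrableOn (fun ζ => max 0 (Real.log (δ / ‖ζ - z‖)) * laplacian ψ ζ)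
      (Metric.ball 0 t)) :
    -(2 * Real.pi * ψ z) ≤ 2 * Real.pi * (t ^ 2 / δ ^ 2)
      + ∫ ζ in Metric.ball (0:ℂ) t, max 0 (Real.log (δ / ‖ζ - z‖)) * laplacian ψ ζ := by
  have hsub1 : Metric.closedBall z δ ⊆ Metric.ball 0 t := by
    intro x hx
    have : ‖x - z‖ ≤ δ := by simpa [dist_eq_norm] using hx
    have h2 : ‖x‖ ≤ ‖x - z‖ + ‖z‖ := by simpa using norm_add_le (x - z) z
    simp; linarith
  have hsub : Metric.closedBall z δ ⊆ Metric.ball 0 R := hsub1.trans (Metric.ball_subset_ball ht.le)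
  have hsub2 : Metric.ball z δ ⊆ Metric.ball 0 t := Metric.ball_subset_closedBall.trans hsub1
  have g := green h hδ hsub 1
  have gi := kernel_int h hsub 1
  have hne := ((Set.countable_singleton z).ae_notMem volume)
  have l1 := l1_bound h hl h0 ht0 ht
  have b1 : ∫ ζ in Metric.ball z δ, (Real.log δ - Real.log ‖ζ - z‖ - 1 * (δ ^ 2 - ‖ζ - z‖ ^ 2) / (2 * δ ^ 2))
        * laplacian ψ ζ ≤ ∫ ζ in Metric.ball (0:ℂ) t, max 0 (Real.log (δ / ‖ζ - z‖)) * laplacian ψ ζ := by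
    calc _ ≤ ∫ ζ in Metric.ball z δ, max 0 (Real.log (δ / ‖ζ - z‖)) * laplacian ψ ζ := by
          apply integral_mono_ae gi (hgi.mono_set hsub2)
          filter_upwards [ae_restrict_mem measurableSet_ball, ae_restrict_of_ae hne] with x hx hx0
          have hp : 0 < ‖x - z‖ := norm_pos_iff.2 (sub_ne_zero.2 hx0)
          have hxr : ‖x - z‖ < δ := by simpa [dist_eq_norm] using hx
          apply mul_le_mul_of_nonneg_right _ (hl x (hsub (Metric.ball_subset_closedBall hx)))
          apply le_max_of_le_right
          rw [Real.log_div hδ.ne' hp.ne']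
          have : 0 ≤ 1 * (δ ^ 2 - ‖x - z‖ ^ 2) / (2 * δ ^ 2) := by
            apply div_nonneg _ (by positivity)
            nlinarith
          linarith
      _ ≤ _ := by
          apply setIntegral_mono_set hgi
          · filter_upwards [ae_restrict_mem measurableSet_ball] with x hx
            exact mul_nonneg (le_max_left _ _) (hl x (Metric.ball_subset_ball ht.le hx))
          · exact hsub2.eventuallyLE
  have b2 : ∫ ζ in Metric.ball (0:ℂ) t, ψ ζ ≤ ∫ ζ in Metric.ball z δ, ψ ζ := by
    have : ∫ ζ in Metric.ball z δ, -ψ ζ ≤ ∫ ζ in Metric.ball (0:ℂ) t, -ψ ζ := by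
      apply setIntegral_mono_set
      · exact ((h.continuousOn.mono (Metric.closedBall_subset_ball ht)).neg.integrableOn_compact
          (isCompact_closedBall _ _)).mono_set Metric.ball_subset_closedBall
      · filter_upwards [ae_restrict_mem measurableSet_ball] with x hx
        simpa using hn x (Metric.ball_subset_ball ht.le hx)
      · exact hsub2.eventuallyLE
    rw [integral_neg, integral_neg] at this
    linarith
  rw [g] at b1
  set J := ∫ ζ in Metric.ball z δ, ψ ζ
  have h4 : -(2 * Real.pi * (t ^ 2 / δ ^ 2)) ≤ 2 * 1 / δ ^ 2 * J := by
    have h5 : -(Real.pi * t ^ 2) ≤ J := l1.trans b2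
    have : -(2 * Real.pi * (t ^ 2 / δ ^ 2)) = 2 * 1 / δ ^ 2 * (-(Real.pi * t ^ 2)) := by
      field_simp
    rw [this]
    exact mul_le_mul_of_nonneg_left h5 (by positivity)
  linarith

lemma exp_ker_le {m δ : ℝ} (hm : 0 < m) (hδ : 0 < δ) (x : ℂ) :
    Real.exp (m * max 0 (Real.log (δ / ‖x‖))) ≤ 1 + (δ / ‖x‖) ^ m := by
  have hnn : 0 ≤ (δ / ‖x‖) ^ m := by positivity
  rcases le_total (Real.log (δ / ‖x‖)) 0 with hc | hc
  · rw [max_eq_left hc]; simpa using hnn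
  · rw [max_eq_right hc]
    by_cases hx : x = 0
    · subst hx; simp; positivity
    · have : 0 < δ / ‖x‖ := div_pos hδ (norm_pos_iff.2 hx)
      rw [Real.rpow_def_of_pos this, mul_comm]; linarith

lemma exp_bound {ψ : ℂ → ℝ} {R : ℝ} (h : ContDiffOn ℝ (⊤ : ℕ∞) ψ (Metric.ball (0 : ℂ) R))
    (hl : ∀ z ∈ Metric.ball (0 : ℂ) R, 0 ≤ laplacian ψ z) (h0 : -1 ≤ ψ 0)
    (hn : ∀ z ∈ Metric.ball (0 : ℂ) R, ψ z ≤ 0) {t δ m : ℝ} (ht0 : 0 < t) (ht : t < R) (hδ : 0 < δ)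
    (hm : 0 < m) (hm2 : m < 2)
    (hmass : ∫ ζ in Metric.ball (0:ℂ) t, laplacian ψ ζ / (2 * Real.pi * m) ≤ 1)
    {z : ℂ} (hz : ‖z‖ + δ < t) :
    ENNReal.ofReal (Real.exp (-ψ z)) ≤ ENNReal.ofReal (Real.exp (t ^ 2 / δ ^ 2)) *
      (1 + ∫⁻ ζ in Metric.ball (0:ℂ) t, ENNReal.ofReal (1 + (δ / ‖ζ - z‖) ^ m)
        * ENNReal.ofReal (laplacian ψ ζ / (2 * Real.pi * m))) := by
  have hK := isCompact_closedBall (0:ℂ) t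
  have hsub : Metric.closedBall (0:ℂ) t ⊆ Metric.ball 0 R := Metric.closedBall_subset_ball ht
  have hlc : ContinuousOn (laplacian ψ) (Metric.closedBall 0 t) :=
    (lap_cont Metric.isOpen_ball h).mono hsub
  set w : ℂ → ℝ := fun ζ => laplacian ψ ζ / (2 * Real.pi * m) with hw
  have hwc : ContinuousOn w (Metric.closedBall 0 t) := hlc.div_const _
  have hw0 : ∀ x ∈ Metric.closedBall (0:ℂ) t, 0 ≤ w x := fun x hx =>
    div_nonneg (hl x (hsub hx)) (by positivity)
  have hFi : IntegrableOn (fun ζ => 1 + (δ / ‖ζ - z‖) ^ m) (Metric.closedBall 0 t) := by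
    refine (intOn_translate (intOn_rpow hm2 δ hδ (2 * t)) z).mono_set ?_
    intro x hx
    have : ‖x‖ ≤ t := by simpa using hx
    have h2 := norm_sub_le x z
    rw [Metric.mem_ball, dist_eq_norm]; linarith
  have hgm : Measurable (fun ζ : ℂ => m * max 0 (Real.log (δ / ‖ζ - z‖))) := by fun_prop
  have hei : IntegrableOn (fun ζ => Real.exp (m * max 0 (Real.log (δ / ‖ζ - z‖))))
      (Metric.closedBall 0 t) := by
    refine Integrable.mono' hFi hgm.exp.aestronglyMeasurable (Filter.Eventually.of_forall fun x => ?_)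
    rw [Real.norm_of_nonneg (Real.exp_pos _).le]
    exact exp_ker_le hm hδ _
  have hgi : IntegrableOn (fun ζ => m * max 0 (Real.log (δ / ‖ζ - z‖)))
      (Metric.closedBall 0 t) := by
    refine Integrable.mono' hei hgm.aestronglyMeasurable (Filter.Eventually.of_forall fun x => ?_)
    rw [Real.norm_of_nonneg (mul_nonneg hm.le (le_max_left _ _))]
    linarith [Real.add_one_le_exp (m * max 0 (Real.log (δ / ‖x - z‖)))]
  have hgi' : IntegrableOn (fun ζ => max 0 (Real.log (δ / ‖ζ - z‖)) * laplacian ψ ζ)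
      (Metric.ball 0 t) := by
    have h1 := ((hgi.mul_continuousOn hlc hK).const_mul m⁻¹)
    refine IntegrableOn.mono_set (t := Metric.closedBall 0 t) ?_ Metric.ball_subset_closedBall
    refine h1.congr (Filter.Eventually.of_forall fun x => ?_)
    simp only []
    field_simp
  have pb := point_bound h hl h0 hn ht0 ht hδ hz hgi'
  have hball := Metric.ball_subset_closedBall (x := (0:ℂ)) (ε := t)
  have hgw : ∫ ζ in Metric.ball (0:ℂ) t, (m * max 0 (Real.log (δ / ‖ζ - z‖))) * w ζ
      = (2 * Real.pi)⁻¹ * ∫ ζ in Metric.ball (0:ℂ) t, max 0 (Real.log (δ / ‖ζ - z‖)) * laplacian ψ ζ := by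
    rw [← integral_const_mul]
    congr 1
    ext ζ
    simp only [hw]
    field_simp
  have hFw : IntegrableOn (fun ζ => (1 + (δ / ‖ζ - z‖) ^ m) * w ζ) (Metric.ball 0 t) :=
    (hFi.mul_continuousOn hwc hK).mono_set hball
  have hew : IntegrableOn (fun ζ => Real.exp (m * max 0 (Real.log (δ / ‖ζ - z‖))) * w ζ)
      (Metric.ball 0 t) := (hei.mul_continuousOn hwc hK).mono_set hball
  have hw0' : ∀ᵐ x ∂(volume.restrict (Metric.ball (0:ℂ) t)), 0 ≤ w x := by
    filter_upwards [ae_restrict_mem measurableSet_ball] with x hx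
    exact hw0 x (hball hx)
  have js := jensen_sub (μ := volume.restrict (Metric.ball (0:ℂ) t)) (w := w)
    (g := fun ζ => m * max 0 (Real.log (δ / ‖ζ - z‖))) hw0'
    ((hwc.integrableOn_compact hK).mono_set hball)
    ((hgi.mul_continuousOn hwc hK).mono_set hball) hew hmass
  rw [hgw] at js
  have hle : ∫ ζ in Metric.ball (0:ℂ) t, Real.exp (m * max 0 (Real.log (δ / ‖ζ - z‖))) * w ζ
      ≤ ∫ ζ in Metric.ball (0:ℂ) t, (1 + (δ / ‖ζ - z‖) ^ m) * w ζ := by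
    apply integral_mono_ae hew hFw
    filter_upwards [hw0'] with x hx
    exact mul_le_mul_of_nonneg_right (exp_ker_le hm hδ _) hx
  have e1 : -ψ z ≤ t ^ 2 / δ ^ 2 + (2 * Real.pi)⁻¹ *
      ∫ ζ in Metric.ball (0:ℂ) t, max 0 (Real.log (δ / ‖ζ - z‖)) * laplacian ψ ζ := by
    have hpi : 0 < (2 * Real.pi)⁻¹ := by positivity
    have := mul_le_mul_of_nonneg_left pb hpi.le
    have a1 : (2 * Real.pi)⁻¹ * -(2 * Real.pi * ψ z) = - ψ z := by field_simp
    have a2 : (2 * Real.pi)⁻¹ * (2 * Real.pi * (t ^ 2 / δ ^ 2)) = t ^ 2 / δ ^ 2 := by field_simp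
    rw [mul_add, a1, a2] at this
    exact this
  have e2 : Real.exp (-ψ z) ≤ Real.exp (t ^ 2 / δ ^ 2) *
      (1 + ∫ ζ in Metric.ball (0:ℂ) t, (1 + (δ / ‖ζ - z‖) ^ m) * w ζ) := by
    refine (Real.exp_le_exp.2 e1).trans ?_
    rw [Real.exp_add]
    exact mul_le_mul_of_nonneg_left (js.trans (by linarith)) (Real.exp_pos _).le
  have hF0 : 0 ≤ᵐ[volume.restrict (Metric.ball (0:ℂ) t)] fun ζ => (1 + (δ / ‖ζ - z‖) ^ m) * w ζ := by
    filter_upwards [hw0'] with x hx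
    exact mul_nonneg (by positivity) hx
  refine (ENNReal.ofReal_le_ofReal e2).trans ?_
  rw [ENNReal.ofReal_mul (Real.exp_pos _).le, ENNReal.ofReal_add zero_le_one (integral_nonneg_of_ae hF0),
    ofReal_integral_eq_lintegral_ofReal hFw hF0, ENNReal.ofReal_one]
  gcongr with ζ
  rw [ENNReal.ofReal_mul (by positivity)]

theorem stmt_0 (R ρ : ℝ) (hR : 0 < R) (hρ₁ : R / 2 ≤ ρ) (hρ₂ : ρ < Real.exp (-(1/2)) * R) :
    ∃ C : ℝ, 0 < C ∧ ∀ ψ : ℂ → ℝ,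
      ContDiffOn ℝ (⊤ : ℕ∞) ψ (Metric.ball (0 : ℂ) R) →
      (∀ z ∈ Metric.ball (0 : ℂ) R, 0 ≤ laplacian ψ z) →
      -1 ≤ ψ 0 →
      (∀ z ∈ Metric.ball (0 : ℂ) R, ψ z ≤ 0) →
      ∫ z in Metric.ball (0 : ℂ) ρ, Real.exp (-ψ z) ≤ C := by
  set t : ℝ := (ρ + Real.exp (-(1/2)) * R) / 2 with ht
  have hρ0 : 0 < ρ := by linarith
  have hρt : ρ < t := by rw [ht]; linarith
  have htR' : t < Real.exp (-(1/2)) * R := by rw [ht]; linarith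
  have ht0 : 0 < t := hρ0.trans hρt
  have hee : Real.exp (1/2) * Real.exp (-(1/2)) = 1 := by rw [← Real.exp_add]; simp
  have hteR : Real.exp (1/2) * t < R := by
    have := mul_lt_mul_of_pos_left htR' (Real.exp_pos (1/2))
    rwa [← mul_assoc, hee, one_mul] at this
  obtain ⟨r, hr1, hr2⟩ := exists_between hteR
  have htet : t < Real.exp (1/2) * t := by
    have : 1 < Real.exp (1/2) := Real.one_lt_exp_iff.2 (by norm_num)
    nlinarith
  have htr : t < r := htet.trans hr1
  have htR : t < R := htr.trans hr2
  have hlog : 1 / 2 < Real.log (r / t) := by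
    rw [Real.lt_log_iff_exp_lt (div_pos (ht0.trans htr) ht0), lt_div_iff₀ ht0]; exact hr1
  set m : ℝ := (Real.log (r / t))⁻¹ with hm
  have hlog0 : 0 < Real.log (r / t) := by linarith
  have hm0 : 0 < m := inv_pos.2 hlog0
  have hm2 : m < 2 := by
    rw [hm, inv_lt_comm₀ hlog0 (by norm_num)]; linarith
  set δ : ℝ := (t - ρ) / 2 with hδd
  have hδ : 0 < δ := by rw [hδd]; linarith
  set F : ℂ → ENNReal := fun x => ENNReal.ofReal (1 + (δ / ‖x‖) ^ m) with hF
  have hFm : Measurable F := by fun_prop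
  set I := ∫⁻ x in Metric.ball (0:ℂ) (2 * R), F x with hI
  have hIfin : I ≠ ⊤ := by
    have := (intOn_rpow hm2 δ hδ (2 * R)).lintegral_lt_top
    exact this.ne
  set M : ENNReal := ENNReal.ofReal (Real.exp (t ^ 2 / δ ^ 2)) *
    (volume (Metric.ball (0:ℂ) ρ) + I) with hM
  have hMfin : M ≠ ⊤ := ENNReal.mul_ne_top ENNReal.ofReal_ne_top
    (ENNReal.add_ne_top.2 ⟨measure_ball_lt_top.ne, hIfin⟩)
  refine ⟨M.toReal + 1, by positivity, ?_⟩
  intro ψ h hl h0 hn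
  have hmb := mass_bound h hl h0 hn ht0 htr hr2
  have hmass : ∫ ζ in Metric.ball (0:ℂ) t, laplacian ψ ζ / (2 * Real.pi * m) ≤ 1 := by
    rw [integral_div, div_le_one (by positivity), hm, ← div_eq_mul_inv, le_div_iff₀ hlog0]
    linarith
  have hρR : Metric.ball (0:ℂ) ρ ⊆ Metric.ball 0 R := Metric.ball_subset_ball (hρt.trans htR).le
  have hsm : AEStronglyMeasurable (fun z => Real.exp (-ψ z)) (volume.restrict (Metric.ball (0:ℂ) ρ)) :=
    ContinuousOn.aestronglyMeasurable (Real.continuous_exp.comp_continuousOn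
      (h.continuousOn.mono hρR).neg) measurableSet_ball
  rw [integral_eq_lintegral_of_nonneg_ae (Filter.Eventually.of_forall fun x => (Real.exp_pos _).le)
    hsm]
  suffices hs : ∫⁻ z in Metric.ball (0:ℂ) ρ, ENNReal.ofReal (Real.exp (-ψ z)) ≤ M by
    have := ENNReal.toReal_mono hMfin hs
    linarith
  set w : ℂ → ENNReal := fun ζ => ENNReal.ofReal (laplacian ψ ζ / (2 * Real.pi * m)) with hw
  have hwm : Measurable w := ((lap_meas ψ).div_const _).ennreal_ofReal
  have hw1 : ∫⁻ ζ in Metric.ball (0:ℂ) t, w ζ ≤ 1 := by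
    rw [← ENNReal.ofReal_one, hw, ← ofReal_integral_eq_lintegral_ofReal]
    · exact ENNReal.ofReal_le_ofReal hmass
    · exact ((((lap_cont Metric.isOpen_ball h).mono
        (Metric.closedBall_subset_ball htR)).div_const _).integrableOn_compact
          (isCompact_closedBall _ _)).mono_set Metric.ball_subset_closedBall
    · filter_upwards [ae_restrict_mem measurableSet_ball] with x hx
      exact div_nonneg (hl x (Metric.ball_subset_ball htR.le hx)) (by positivity)
  calc ∫⁻ z in Metric.ball (0:ℂ) ρ, ENNReal.ofReal (Real.exp (-ψ z))
      ≤ ∫⁻ z in Metric.ball (0:ℂ) ρ, ENNReal.ofReal (Real.exp (t ^ 2 / δ ^ 2)) *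
        (1 + ∫⁻ ζ in Metric.ball (0:ℂ) t, F (ζ - z) * w ζ) := by
        apply setLIntegral_mono' measurableSet_ball
        intro z hz
        have hz' : ‖z‖ < ρ := by simpa using hz
        exact exp_bound h hl h0 hn ht0 htR hδ hm0 hm2 hmass (by rw [hδd]; linarith)
    _ = ENNReal.ofReal (Real.exp (t ^ 2 / δ ^ 2)) * (volume (Metric.ball (0:ℂ) ρ) +
        ∫⁻ z in Metric.ball (0:ℂ) ρ, ∫⁻ ζ in Metric.ball (0:ℂ) t, F (ζ - z) * w ζ) := by
        rw [lintegral_const_mul' _ _ ENNReal.ofReal_ne_top, lintegral_add_left measurable_const]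
        simp
    _ ≤ M := by
        rw [hM]
        gcongr
        rw [lintegral_lintegral_swap]
        · calc _ ≤ ∫⁻ ζ in Metric.ball (0:ℂ) t, I * w ζ := by
                apply setLIntegral_mono' measurableSet_ball
                intro ζ hζ
                rw [lintegral_mul_const _ (by fun_prop)]
                gcongr
                rw [hI, ← lintegral_indicator measurableSet_ball,
                  ← lintegral_indicator measurableSet_ball,
                  ← lintegral_sub_left_eq_self ((Metric.ball (0:ℂ) (2 * R)).indicator F) ζ]
                apply lintegral_mono
                intro z
                by_cases hz : z ∈ Metric.ball (0:ℂ) ρ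
                · have : ζ - z ∈ Metric.ball (0:ℂ) (2 * R) := by
                    have h1 : ‖ζ‖ < t := by simpa using hζ
                    have h2 : ‖z‖ < ρ := by simpa using hz
                    have := norm_sub_le ζ z
                    rw [mem_ball_zero_iff]; linarith
                  simp only []
                  rw [Set.indicator_of_mem hz, Set.indicator_of_mem this]
                · simp only []
                  rw [Set.indicator_of_notMem hz]; exact zero_le
            _ = I * ∫⁻ ζ in Metric.ball (0:ℂ) t, w ζ := lintegral_const_mul _ hwm
            _ ≤ I := by
                calc _ ≤ I * 1 := by gcongr
                  _ = I := mul_one _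
        · apply Measurable.aemeasurable
          unfold Function.uncurry
          fun_prop
end

section
/- Let R > 0 and ε ∈ (0,1), and let ψ̃ be a smooth subharmonic function on an open neighborhood of the closed disk of radius R centered at 0 in ℂ, satisfying ψ̃ ≤ 1 on the closed disk and ψ̃(0) ≥ 0. Then ∫_{B_{R(1−ε)}(0)} Δψ̃(ζ) dA(ζ) ≤ 2π / log(1/(1−ε)); in particular, for every ε ∈ (0,1) there is a constant C(ε), independent of R and ψ̃, bounding (1/2π) ∫_{B_{R(1−ε)}(0)} Δψ̃ dA. -/
open MeasureTheory

noncomputable def eT (θ : ℝ) : ℂ := (Real.cos θ : ℂ) + (Real.sin θ : ℂ) * Complex.I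

lemma eT_contDiff : ContDiff ℝ 2 eT := by
  unfold eT
  have h1 : ContDiff ℝ 2 (fun θ : ℝ => (Real.cos θ : ℂ)) :=
    Complex.ofRealCLM.contDiff.comp Real.contDiff_cos
  have h2 : ContDiff ℝ 2 (fun θ : ℝ => (Real.sin θ : ℂ)) :=
    Complex.ofRealCLM.contDiff.comp Real.contDiff_sin
  fun_prop

lemma eT_deriv (θ : ℝ) : HasDerivAt eT (Complex.I * eT θ) θ := by
  unfold eT
  have h1 := (Real.hasDerivAt_cos θ).ofReal_comp
  have h2 := ((Real.hasDerivAt_sin θ).ofReal_comp).mul_const Complex.I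
  refine (h1.add h2).congr_deriv ?_
  push_cast
  linear_combination (-(Complex.sin θ)) * Complex.I_mul_I

lemma eT_norm (θ : ℝ) : ‖eT θ‖ = 1 := by
  have := Complex.norm_exp_ofReal_mul_I θ
  rw [Complex.exp_mul_I] at this
  simpa [eT] using this

lemma eT_pi : eT Real.pi = eT (-Real.pi) := by simp [eT]

lemma lap_eq_s5 {f : ℂ → ℝ} (hf : ContDiff ℝ (⊤ : ℕ∞) f) (z : ℂ) (θ : ℝ) :
    laplacian f z = fderiv ℝ (fderiv ℝ f) z (eT θ) (eT θ) +
      fderiv ℝ (fderiv ℝ f) z (Complex.I * eT θ) (Complex.I * eT θ) := by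
  have hD : ContDiff ℝ 1 (fderiv ℝ f) := hf.fderiv_right (by norm_cast)
  have hd : DifferentiableAt ℝ (fderiv ℝ f) z := (hD.differentiable (by norm_num)) z
  have key : ∀ v : ℂ, fderiv ℝ (fun w => fderiv ℝ f w v) z v = fderiv ℝ (fderiv ℝ f) z v v := by
    intro v
    rw [fderiv_clm_apply hd (by fun_prop)]
    simp
  unfold laplacian
  rw [key, key]
  set B := fderiv ℝ (fderiv ℝ f) z
  have e1 : eT θ = (Real.cos θ) • (1 : ℂ) + (Real.sin θ) • Complex.I := by
    simp [eT]
  have e2 : Complex.I * eT θ = (-Real.sin θ) • (1 : ℂ) + (Real.cos θ) • Complex.I := by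
    simp only [eT, Complex.real_smul]
    push_cast
    linear_combination ((Complex.sin θ)) * Complex.I_mul_I
  rw [e2, e1]
  simp only [map_add, map_smul, add_apply, smul_apply,
    smul_eq_mul]
  linear_combination (-(B 1 1) - B Complex.I Complex.I) * Real.sin_sq_add_cos_sq θ

lemma lap_cont_s5 {f : ℂ → ℝ} (hf : ContDiff ℝ (⊤ : ℕ∞) f) : Continuous (laplacian f) := by
  have hD : ContDiff ℝ 1 (fderiv ℝ f) := hf.fderiv_right (by norm_cast)
  have hB : Continuous (fderiv ℝ (fderiv ℝ f)) := hD.continuous_fderiv (by norm_num)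
  have : laplacian f = fun z => fderiv ℝ (fderiv ℝ f) z (eT 0) (eT 0) +
      fderiv ℝ (fderiv ℝ f) z (Complex.I * eT 0) (Complex.I * eT 0) := by
    ext z; exact lap_eq_s5 hf z 0
  rw [this]
  fun_prop

lemma mul_eT_deriv (r θ : ℝ) : HasDerivAt (fun s : ℝ => (s : ℂ) * eT θ) (eT θ) r := by
  simpa using (Complex.ofRealCLM.hasDerivAt (x := r)).mul_const (eT θ)

lemma flux {f : ℂ → ℝ} (hf : ContDiff ℝ (⊤ : ℕ∞) f) (r : ℝ) :
    (∫ s in (0 : ℝ)..r, ∫ θ in (-Real.pi)..Real.pi, s * laplacian f (s * eT θ)) =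
      r * ∫ θ in (-Real.pi)..Real.pi, fderiv ℝ f (r * eT θ) (eT θ) := by
  have hD : ContDiff ℝ 1 (fderiv ℝ f) := hf.fderiv_right (by norm_cast)
  have hd : Differentiable ℝ (fderiv ℝ f) := hD.differentiable (by norm_num)
  have heT : ContDiff ℝ 1 eT := eT_contDiff.of_le (by norm_num)
  have heTc := heT.continuous
  have hE : ContDiff ℝ 1 (fun p : ℝ × ℝ => eT p.2) := heT.comp contDiff_snd
  have hp : ContDiff ℝ 1 (fun p : ℝ × ℝ => (p.1 : ℂ) * eT p.2) :=
    (Complex.ofRealCLM.contDiff.comp contDiff_fst).mul hE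
  have hDp := hD.comp hp
  let P : ℝ × ℝ → ℝ := fun p => p.1 * fderiv ℝ f (p.1 * eT p.2) (eT p.2)
  let Q : ℝ × ℝ → ℝ := fun p => fderiv ℝ f (p.1 * eT p.2) (Complex.I * eT p.2)
  have hP : ContDiff ℝ 1 P := contDiff_fst.mul (hDp.clm_apply hE)
  have hQ : ContDiff ℝ 1 Q := hDp.clm_apply (contDiff_const.mul hE)
  have hPd := hP.differentiable (by norm_num)
  have hQd := hQ.differentiable (by norm_num)
  have key : ∀ p : ℝ × ℝ, fderiv ℝ P p (1, 0) + fderiv ℝ Q p (0, 1) =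
      p.1 * laplacian f (p.1 * eT p.2) := by
    rintro ⟨s, θ⟩
    have c1 : HasDerivAt (fun t : ℝ => (t, θ)) ((1 : ℝ), (0 : ℝ)) s :=
      (hasDerivAt_id s).prodMk (hasDerivAt_const s θ)
    have c2 : HasDerivAt (fun t : ℝ => (s, t)) ((0 : ℝ), (1 : ℝ)) θ :=
      (hasDerivAt_const θ s).prodMk (hasDerivAt_id θ)
    have a1 : HasDerivAt (fun t => P (t, θ)) (fderiv ℝ P (s, θ) (1, 0)) s :=
      HasFDerivAt.comp_hasDerivAt (l := P) (f := fun t : ℝ => (t, θ)) s (hPd (s, θ)).hasFDerivAt c1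
    have a2 : HasDerivAt (fun t => Q (s, t)) (fderiv ℝ Q (s, θ) (0, 1)) θ :=
      HasFDerivAt.comp_hasDerivAt (l := Q) (f := fun t : ℝ => (s, t)) θ (hQd (s, θ)).hasFDerivAt c2
    have d1 : HasDerivAt (fun t : ℝ => fderiv ℝ f (t * eT θ))
        (fderiv ℝ (fderiv ℝ f) (s * eT θ) (eT θ)) s :=
      (hd (s * eT θ)).hasFDerivAt.comp_hasDerivAt s (mul_eT_deriv s θ)
    have d2 : HasDerivAt (fun t : ℝ => fderiv ℝ f (s * eT t))
        (fderiv ℝ (fderiv ℝ f) (s * eT θ) (s * (Complex.I * eT θ))) θ :=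
      (hd (s * eT θ)).hasFDerivAt.comp_hasDerivAt θ ((eT_deriv θ).const_mul (s : ℂ))
    have b1 : HasDerivAt (fun t => P (t, θ)) _ s := (hasDerivAt_id s).mul
      (d1.clm_apply (hasDerivAt_const s (eT θ)))
    have b2 : HasDerivAt (fun t => Q (s, t)) _ θ :=
      d2.clm_apply ((eT_deriv θ).const_mul Complex.I)
    rw [a1.unique b1, a2.unique b2, lap_eq_s5 hf _ θ]
    have e1 : (s : ℂ) * (Complex.I * eT θ) = s • (Complex.I * eT θ) := by simp
    have e2 : Complex.I * (Complex.I * eT θ) = - eT θ := by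
      rw [← mul_assoc, Complex.I_mul_I]; ring
    rw [e1, e2]
    simp only [map_smul, map_neg, map_zero, smul_apply, smul_eq_mul, id]
    ring
  have hcont : Continuous (fun p : ℝ × ℝ => p.1 * laplacian f (p.1 * eT p.2)) :=
    continuous_fst.mul ((lap_cont_s5 hf).comp hp.continuous)
  have := integral2_divergence_prod_of_hasFDerivAt P Q (fderiv ℝ P) (fderiv ℝ Q) 0 (-Real.pi) r
    Real.pi hP.continuous.continuousOn hQ.continuous.continuousOn
    (fun x _ => (hPd x).hasFDerivAt) (fun x _ => (hQd x).hasFDerivAt)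
    (by
      simp_rw [key]
      exact hcont.continuousOn.integrableOn_compact (isCompact_uIcc.prod isCompact_uIcc))
  simp_rw [key] at this
  rw [this]
  simp [P, Q, eT_pi, intervalIntegral.integral_const_mul]

lemma polar_ball_s5 {g : ℂ → ℝ} (hg : Continuous g) {r : ℝ} (hr : 0 ≤ r) :
    (∫ z in Metric.ball (0 : ℂ) r, g z) =
      ∫ s in (0 : ℝ)..r, ∫ θ in (-Real.pi)..Real.pi, s * g (s * eT θ) := by
  have hpi : -Real.pi ≤ Real.pi := by linarith [Real.pi_pos]
  have hc : Continuous (fun p : ℝ × ℝ => p.1 * g (p.1 * eT p.2)) := by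
    have := eT_contDiff.continuous
    fun_prop
  rw [intervalIntegral.integral_of_le hr, ← integral_indicator Metric.isOpen_ball.measurableSet,
    ← Complex.integral_comp_polarCoord_symm, polarCoord_target]
  simp_rw [intervalIntegral.integral_of_le hpi]
  rw [← setIntegral_prod (fun p : ℝ × ℝ => p.1 * g (p.1 * eT p.2))
    ((hc.continuousOn.integrableOn_compact (isCompact_Icc.prod isCompact_Icc)).mono_set
      (Set.prod_mono Set.Ioc_subset_Icc_self Set.Ioc_subset_Icc_self))]
  have hae : ((Set.Ioc 0 r ×ˢ Set.Ioc (-Real.pi) Real.pi : Set (ℝ × ℝ))) =ᵐ[volume]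
      (Set.Ioo 0 r ×ˢ Set.Ioo (-Real.pi) Real.pi : Set (ℝ × ℝ)) :=
    (Measure.set_prod_ae_eq Ioo_ae_eq_Ioc Ioo_ae_eq_Ioc).symm
  rw [← Measure.volume_eq_prod, setIntegral_congr_set hae]
  have hsub : (Set.Ioo 0 r ×ˢ Set.Ioo (-Real.pi) Real.pi : Set (ℝ × ℝ)) ⊆
    Set.Ioi 0 ×ˢ Set.Ioo (-Real.pi) Real.pi := Set.prod_mono Set.Ioo_subset_Ioi_self subset_rfl
  rw [setIntegral_eq_of_subset_of_forall_sdiff_eq_zero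
    (measurableSet_Ioi.prod measurableSet_Ioo) hsub]
  · refine setIntegral_congr_fun (measurableSet_Ioo.prod measurableSet_Ioo) ?_
    rintro ⟨s, θ⟩ ⟨hs, -⟩
    have hs' : (s : ℂ) * eT θ ∈ Metric.ball (0 : ℂ) r := by
      rw [mem_ball_zero_iff, norm_mul, eT_norm, mul_one, Complex.norm_real, Real.norm_eq_abs,
        abs_of_pos hs.1]
      exact hs.2
    simp only [Complex.polarCoord_symm_apply, smul_eq_mul]
    change s * (Metric.ball (0 : ℂ) r).indicator g ((s : ℂ) * eT θ) = _
    rw [Set.indicator_of_mem hs']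
  · rintro ⟨s, θ⟩ ⟨⟨hs, hθ⟩, hn⟩
    have hs' : (s : ℂ) * eT θ ∉ Metric.ball (0 : ℂ) r := by
      rw [mem_ball_zero_iff, norm_mul, eT_norm, mul_one, Complex.norm_real, Real.norm_eq_abs,
        abs_of_pos hs]
      intro h
      exact hn ⟨⟨hs, h⟩, hθ⟩
    simp only [Complex.polarCoord_symm_apply, smul_eq_mul]
    change s * (Metric.ball (0 : ℂ) r).indicator g ((s : ℂ) * eT θ) = _
    rw [Set.indicator_of_notMem hs', mul_zero]

lemma circ_diff {f : ℂ → ℝ} (hf : ContDiff ℝ (⊤ : ℕ∞) f) (a b : ℝ) :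
    (∫ r in a..b, ∫ θ in (-Real.pi)..Real.pi, fderiv ℝ f (r * eT θ) (eT θ)) =
      (∫ θ in (-Real.pi)..Real.pi, f (b * eT θ)) - ∫ θ in (-Real.pi)..Real.pi, f (a * eT θ) := by
  have hD : Continuous (fderiv ℝ f) := hf.continuous_fderiv (by simp)
  have hfc := hf.continuous
  have he := eT_contDiff.continuous
  have hc : Continuous (fun p : ℝ × ℝ => fderiv ℝ f (p.1 * eT p.2) (eT p.2)) := by fun_prop
  rw [intervalIntegral_intervalIntegral_swap, ← intervalIntegral.integral_sub]
  · refine intervalIntegral.integral_congr fun θ _ => ?_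
    refine intervalIntegral.integral_eq_sub_of_hasDerivAt (f := fun r : ℝ => f (r * eT θ))
      (fun r _ => ?_) ?_
    · exact ((hf.differentiable (by simp)) _).hasFDerivAt.comp_hasDerivAt r (mul_eT_deriv r θ)
    · apply Continuous.intervalIntegrable; fun_prop
  · apply Continuous.intervalIntegrable; fun_prop
  · apply Continuous.intervalIntegrable; fun_prop
  · exact (hc.continuousOn.integrableOn_compact (isCompact_uIcc.prod isCompact_uIcc)).mono_set
      (Set.prod_mono Set.uIoc_subset_uIcc Set.uIoc_subset_uIcc)

lemma main_global {R ε : ℝ} (hR : 0 < R) (hε : ε ∈ Set.Ioo (0 : ℝ) 1)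
    {f : ℂ → ℝ} (hf : ContDiff ℝ (⊤ : ℕ∞) f)
    (hsh : ∀ z ∈ Metric.ball (0 : ℂ) R, 0 ≤ laplacian f z)
    (h1 : ∀ z ∈ Metric.closedBall (0 : ℂ) R, f z ≤ 1) (h0 : 0 ≤ f 0) :
    (∫ ζ in Metric.ball (0 : ℂ) (R * (1 - ε)), laplacian f ζ)
        ≤ 2 * Real.pi / Real.log (1 / (1 - ε)) := by
  obtain ⟨he0, he1⟩ := hε
  have hpi : -Real.pi ≤ Real.pi := by linarith [Real.pi_pos]
  set r0 := R * (1 - ε) with hr0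
  have hr0p : 0 < r0 := mul_pos hR (by linarith)
  have hr0R : r0 < R := by nlinarith
  set M : ℝ → ℝ := fun r => ∫ ζ in Metric.ball (0 : ℂ) r, laplacian f ζ with hM
  set N : ℝ → ℝ := fun r => ∫ θ in (-Real.pi)..Real.pi, fderiv ℝ f (r * eT θ) (eT θ) with hN
  have hMN : ∀ r, 0 ≤ r → M r = r * N r := fun r hr => by
    rw [hM, hN]; simp only
    rw [polar_ball_s5 (lap_cont_s5 hf) hr, flux hf]
  have hint : ∀ r, IntegrableOn (laplacian f) (Metric.ball 0 r) := fun r =>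
    ((lap_cont_s5 hf).continuousOn.integrableOn_compact (isCompact_closedBall 0 r)).mono_set
      Metric.ball_subset_closedBall
  have hM0 : ∀ r, r ≤ R → 0 ≤ M r := fun r hr =>
    setIntegral_nonneg Metric.isOpen_ball.measurableSet
      fun z hz => hsh z (Metric.ball_subset_ball hr hz)
  have hMm : ∀ r, r0 ≤ r → r ≤ R → M r0 ≤ M r := fun r h hr =>
    setIntegral_mono_set (hint r)
      ((ae_restrict_iff' Metric.isOpen_ball.measurableSet).2
        (Filter.Eventually.of_forall fun z hz => hsh z (Metric.ball_subset_ball hr hz)))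
      (Metric.ball_subset_ball h).eventuallyLE
  have hNc : Continuous N := by
    have hD : Continuous (fderiv ℝ f) := hf.continuous_fderiv (by simp)
    have he := eT_contDiff.continuous
    apply intervalIntegral.continuous_parametric_intervalIntegral_of_continuous'
    fun_prop
  have i1 : 0 ≤ ∫ r in (0 : ℝ)..r0, N r := by
    rw [intervalIntegral.integral_of_le hr0p.le]
    refine setIntegral_nonneg measurableSet_Ioc fun r hr => ?_
    have := hM0 r (hr.2.trans hr0R.le)
    rw [hMN r hr.1.le] at this
    exact nonneg_of_mul_nonneg_right this hr.1
  have i2 : M r0 * Real.log (R / r0) ≤ ∫ r in r0..R, N r := by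
    rw [← integral_inv_of_pos hr0p hR, ← intervalIntegral.integral_const_mul]
    refine intervalIntegral.integral_mono_on hr0R.le ?_ (hNc.intervalIntegrable _ _) ?_
    · apply ContinuousOn.intervalIntegrable
      refine continuousOn_const.mul (continuousOn_id.inv₀ fun x hx => ?_)
      rw [Set.uIcc_of_le hr0R.le] at hx
      exact (hr0p.trans_le hx.1).ne'
    · intro r hr
      have hrp := hr0p.trans_le hr.1
      have := hMm r hr.1 hr.2
      rw [hMN r hrp.le] at this
      rw [← div_eq_mul_inv, div_le_iff₀ hrp]
      linarith
  rw [hN] at i1 i2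
  rw [circ_diff hf] at i1 i2
  have hfc := hf.continuous
  have he := eT_contDiff.continuous
  have j1 : (∫ θ in (-Real.pi)..Real.pi, f (R * eT θ)) ≤ 2 * Real.pi := by
    calc _ ≤ ∫ θ in (-Real.pi)..Real.pi, (1 : ℝ) := by
          refine intervalIntegral.integral_mono_on hpi ?_ (by simp) fun θ _ => h1 _ ?_
          · apply Continuous.intervalIntegrable; fun_prop
          · simp [eT_norm, abs_of_pos hR]
      _ = _ := by simp; ring
  have j0 : 0 ≤ ∫ θ in (-Real.pi)..Real.pi, f ((0 : ℝ) * eT θ) := by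
    simp only [Complex.ofReal_zero, zero_mul, intervalIntegral.integral_const, smul_eq_mul]
    exact mul_nonneg (by linarith) h0
  have hlog : R / r0 = 1 / (1 - ε) := by
    rw [hr0]; field_simp
  rw [hlog] at i2
  rw [le_div_iff₀ (Real.log_pos ((one_lt_div (by linarith)).2 (by linarith)))]
  change M r0 * _ ≤ _
  linarith

lemma main_local {R ε : ℝ} (hR : 0 < R) (hε : ε ∈ Set.Ioo (0 : ℝ) 1)
    {ψ : ℂ → ℝ} {U : Set ℂ} (hU : IsOpen U)
    (hUR : Metric.closedBall (0 : ℂ) R ⊆ U)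
    (hsm : ContDiffOn ℝ (⊤ : ℕ∞) ψ U) (hsh : ∀ z ∈ U, 0 ≤ laplacian ψ z)
    (h1 : ∀ z ∈ Metric.closedBall (0 : ℂ) R, ψ z ≤ 1) (h0 : 0 ≤ ψ 0) :
    (∫ ζ in Metric.ball (0 : ℂ) (R * (1 - ε)), laplacian ψ ζ)
        ≤ 2 * Real.pi / Real.log (1 / (1 - ε)) := by
  obtain ⟨δ, hδ, hδU⟩ := (isCompact_closedBall (0 : ℂ) R).exists_cthickening_subset_open hU hUR
  rw [cthickening_closedBall hδ.le hR.le] at hδU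
  let χ : ContDiffBump (0 : ℂ) := ⟨R, δ + R, hR, by linarith⟩
  have hχ1 : ∀ z ∈ Metric.closedBall (0 : ℂ) R, χ z = 1 := fun z hz =>
    χ.one_of_mem_closedBall hz
  let f : ℂ → ℝ := fun z => χ z * ψ z
  have hfeq : ∀ z ∈ Metric.closedBall (0 : ℂ) R, f z = ψ z := fun z hz => by
    simp [f, hχ1 z hz]
  have hf : ContDiff ℝ (⊤ : ℕ∞) f := by
    rw [contDiff_iff_contDiffAt]
    intro z
    by_cases hz : z ∈ U
    · exact χ.contDiff.contDiffAt.mul (hsm.contDiffAt (hU.mem_nhds hz))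
    · have hz' : z ∉ tsupport χ := by
        rw [χ.tsupport_eq]; exact fun h => hz (hδU h)
      have : f =ᶠ[nhds z] fun _ => 0 := by
        filter_upwards [notMem_tsupport_iff_eventuallyEq.1 hz'] with w hw
        simp [f, hw]
      exact contDiffAt_const.congr_of_eventuallyEq this
  have hlap : ∀ z ∈ Metric.ball (0 : ℂ) R, laplacian f z = laplacian ψ z := by
    intro z hz
    have hev : f =ᶠ[nhds z] ψ := by
      filter_upwards [Metric.isOpen_ball.mem_nhds hz] with w hw
      exact hfeq w (Metric.ball_subset_closedBall hw)
    have hev2 := hev.fderiv (𝕜 := ℝ)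
    have : ∀ v : ℂ, fderiv ℝ (fun w => fderiv ℝ f w v) z = fderiv ℝ (fun w => fderiv ℝ ψ w v) z := by
      intro v
      apply Filter.EventuallyEq.fderiv_eq
      filter_upwards [hev2] with w hw
      rw [hw]
    unfold laplacian
    rw [this, this]
  have hsubR : R * (1 - ε) ≤ R := by nlinarith [hε.1]
  have := main_global hR hε hf
    (fun z hz => by
      rw [hlap z hz]; exact hsh z (hUR (Metric.ball_subset_closedBall hz)))
    (fun z hz => by rw [hfeq z hz]; exact h1 z hz)
    (by rw [hfeq 0 (by simp [hR.le])]; exact h0)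
  rwa [setIntegral_congr_fun Metric.isOpen_ball.measurableSet
    (fun z hz => hlap z (Metric.ball_subset_ball hsubR hz))] at this

/-- If `ψ̃` is smooth subharmonic on an open neighborhood of the closed disk of radius `R > 0`,
with `ψ̃ ≤ 1` on the closed disk and `ψ̃(0) ≥ 0`, and `ε ∈ (0,1)`, then
`∫_{B_{R(1−ε)}(0)} Δψ̃ dA ≤ 2π / log(1/(1−ε))`; in particular, for every `ε ∈ (0,1)` there is a
constant `C(ε)`, independent of `R` and `ψ̃`, bounding `(1/2π) ∫_{B_{R(1−ε)}(0)} Δψ̃ dA`. -/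
theorem stmt_5 (R ε : ℝ) (hR : 0 < R) (hε : ε ∈ Set.Ioo (0 : ℝ) 1)
    (ψ : ℂ → ℝ) (U : Set ℂ) (hU : IsOpen U)
    (hUR : Metric.closedBall (0 : ℂ) R ⊆ U)
    (hsm : ContDiffOn ℝ (⊤ : ℕ∞) ψ U) (hsh : ∀ z ∈ U, 0 ≤ laplacian ψ z)
    (h1 : ∀ z ∈ Metric.closedBall (0 : ℂ) R, ψ z ≤ 1) (h0 : 0 ≤ ψ 0) :
    (∫ ζ in Metric.ball (0 : ℂ) (R * (1 - ε)), laplacian ψ ζ)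
        ≤ 2 * Real.pi / Real.log (1 / (1 - ε)) ∧
    (∀ ε' ∈ Set.Ioo (0 : ℝ) 1, ∃ C : ℝ,
      ∀ R' : ℝ, 0 < R' → ∀ ψ' : ℂ → ℝ, ∀ U' : Set ℂ, IsOpen U' →
        Metric.closedBall (0 : ℂ) R' ⊆ U' → ContDiffOn ℝ (⊤ : ℕ∞) ψ' U' →
        (∀ z ∈ U', 0 ≤ laplacian ψ' z) →
        (∀ z ∈ Metric.closedBall (0 : ℂ) R', ψ' z ≤ 1) → 0 ≤ ψ' 0 →
        (1 / (2 * Real.pi)) * ∫ ζ in Metric.ball (0 : ℂ) (R' * (1 - ε')), laplacian ψ' ζ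
          ≤ C) := by
  refine ⟨main_local hR hε hU hUR hsm hsh h1 h0, fun ε' hε' =>
    ⟨1 / (2 * Real.pi) * (2 * Real.pi / Real.log (1 / (1 - ε'))), ?_⟩⟩
  intro R' hR' ψ' U' hU' hUR' hsm' hsh' h1' h0'
  exact mul_le_mul_of_nonneg_left (main_local hR' hε' hU' hUR' hsm' hsh' h1' h0')
    (by have := Real.pi_pos; positivity)
end

section
/- Let (ℛ, d) be a metric space with a distinguished point 0, with metric completion (ℛ̄, d), let F : ℛ → ℝ be lower semicontinuous, and let F̄ : ℛ̄ → ℝ ∪ {+∞} be its greatest lsc extension, F̄(u) = sup_{ε>0} inf { F(v) : v ∈ ℛ, d(u,v) ≤ ε }. Let ℳ = { u ∈ ℛ̄ : F̄(u) = inf_{ℛ̄} F̄ } be the set of minimizers, and let G be a group acting on ℛ, with d_G(Gu, Gv) := inf_{f,g ∈ G} d(f.u, g.v) on the orbit space. Assume: (P1) for any φ₀, φ₁ ∈ ℛ there is a d-geodesic segment [0,1] ∋ t ↦ φ_t ∈ ℛ̄ joining them along which t ↦ F̄(φ_t) is continuous and convex; (P2) every sequence φ_j ∈ ℛ̄ with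 F̄(φ_j) → inf_{ℛ̄} F̄ and d(0, φ_j) bounded has a subsequence d-converging to some element of ℳ; (P3) ℳ ⊆ ℛ; (P4) G acts on ℛ by d-isometries; (P5) G acts transitively on ℳ; (P6) if ℳ ≠ ∅ then for any u, v ∈ ℛ there exists g ∈ G with d_G(Gu, Gv) = d(u, g.v); (P7) F(v) − F(u) = F(g.v) − F(g.u) for all u, v ∈ ℛ and g ∈ G. Then ℳ is nonempty if and only if F is G-invariant and there exist C, D > 0 such that F(u) ≥ C · d_G(G0, Gu) − D for all u ∈ ℛ. -/
open UniformSpace Filter Topology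

/-- The greatest lower semicontinuous extension of `F : X → ℝ` to the metric completion of `X`:
`extF F u = sup_{ε>0} inf { F v : v ∈ X, dist u v ≤ ε }`, with values in `ℝ ∪ {±∞}`. -/
noncomputable def extF {X : Type*} [MetricSpace X] (F : X → ℝ) (u : Completion X) : EReal :=
  ⨆ (ε : ℝ) (_ : 0 < ε), ⨅ (v : X) (_ : dist u (v : Completion X) ≤ ε), (F v : EReal)

/-- The induced distance between the `G`-orbits of two points:
`dOrbit G u v = inf_{f,g ∈ G} dist (f.u) (g.v)`. -/
noncomputable def dOrbit {X : Type*} [MetricSpace X] (G : Type*) [Group G] [MulAction G X]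
    (u v : X) : ℝ :=
  ⨅ p : G × G, dist (p.1 • u) (p.2 • v)

theorem le_extF {X : Type*} [MetricSpace X] (F : X → ℝ) (a : ℝ) (h : ∀ x, a ≤ F x)
    (u : Completion X) : (a : EReal) ≤ extF F u := by
  unfold extF
  refine le_iSup₂_of_le 1 one_pos (le_iInf₂ fun v _ => ?_)
  exact_mod_cast h v

theorem extF_coe {X : Type*} [MetricSpace X] (F : X → ℝ) (hF : LowerSemicontinuous F)
    (x : X) : extF F (x : Completion X) = (F x : EReal) := by
  unfold extF
  apply le_antisymm
  · refine iSup₂_le fun ε hε => ?_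
    exact iInf₂_le x (by simpa using hε.le)
  · refine le_of_forall_lt fun c hc => ?_
    obtain ⟨r, hcr, hr⟩ := EReal.lt_iff_exists_real_btwn.1 hc
    have hr' : r < F x := by exact_mod_cast hr
    obtain ⟨ε, hε, hb⟩ := Metric.eventually_nhds_iff.1 (hF x r hr')
    refine hcr.trans_le ?_
    refine le_iSup₂_of_le (ε / 2) (half_pos hε) (le_iInf₂ fun v hv => ?_)
    rw [Completion.dist_eq, dist_comm] at hv
    exact_mod_cast (hb (by linarith : dist v x < ε)).le

theorem dOrbit_le {X : Type*} [MetricSpace X] (G : Type*) [Group G] [MulAction G X]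
    (u v : X) (f g : G) : dOrbit G u v ≤ dist (f • u) (g • v) :=
  ciInf_le (f := fun p : G × G => dist (p.1 • u) (p.2 • v))
    ⟨0, by rintro _ ⟨p, rfl⟩; exact dist_nonneg⟩ (f, g)

theorem dOrbit_nonneg {X : Type*} [MetricSpace X] (G : Type*) [Group G] [MulAction G X]
    (u v : X) : 0 ≤ dOrbit G u v :=
  Real.iInf_nonneg fun _ => dist_nonneg

/-- The general existence/properness principle: under properties (P1)–(P7), the set `M` of
minimizers of the greatest lsc extension of `F` on the metric completion is nonempty if and
only if `F` is `G`-invariant and `F(u) ≥ C·d_G(G0, Gu) − D` for some `C, D > 0`. -/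
theorem stmt_10 {X : Type*} [MetricSpace X] (x₀ : X)
    (G : Type*) [Group G] [MulAction G X]
    (F : X → ℝ) (hF : LowerSemicontinuous F)
    (M : Set (Completion X))
    (hM : M = {u : Completion X | extF F u = ⨅ v : Completion X, extF F v})
    -- (P1): d-geodesics between points of X along which the extension of F is
    -- continuous and convex (in particular finite, real-valued).
    (P1 : ∀ φ₀ φ₁ : X, ∃ γ : ℝ → Completion X, ∃ f : ℝ → ℝ,
      γ 0 = (φ₀ : Completion X) ∧ γ 1 = (φ₁ : Completion X) ∧
      (∀ s ∈ Set.Icc (0 : ℝ) 1, ∀ t ∈ Set.Icc (0 : ℝ) 1,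
        dist (γ s) (γ t) = |s - t| * dist φ₀ φ₁) ∧
      (∀ t ∈ Set.Icc (0 : ℝ) 1, extF F (γ t) = (f t : EReal)) ∧
      ContinuousOn f (Set.Icc 0 1) ∧ ConvexOn ℝ (Set.Icc 0 1) f)
    -- (P2): minimizing sequences at bounded distance from the base point subconverge to
    -- a minimizer.
    (P2 : ∀ φ : ℕ → Completion X,
      Tendsto (fun j => extF F (φ j)) atTop (𝓝 (⨅ v : Completion X, extF F v)) →
      (∃ C : ℝ, ∀ j, dist ((x₀ : Completion X)) (φ j) ≤ C) →
      ∃ u ∈ M, ∃ σ : ℕ → ℕ, StrictMono σ ∧ Tendsto (fun k => φ (σ k)) atTop (𝓝 u))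
    -- (P3): minimizers are regular, i.e. lie in X.
    (P3 : ∀ u ∈ M, ∃ x : X, u = (x : Completion X))
    -- (P4): G acts by d-isometries.
    (P4 : ∀ g : G, Isometry (fun x : X => g • x))
    -- (P5): G acts on M, transitively.
    (P5a : ∀ g : G, ∀ x : X, (x : Completion X) ∈ M → ((g • x : X) : Completion X) ∈ M)
    (P5b : ∀ x y : X, (x : Completion X) ∈ M → (y : Completion X) ∈ M → ∃ g : G, g • x = y)
    -- (P6): if M is nonempty, the orbit distance is attained.
    (P6 : M.Nonempty → ∀ u v : X, ∃ g : G, dOrbit G u v = dist u (g • v))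
    -- (P7): F is of Bott--Chern type: differences are G-invariant.
    (P7 : ∀ u v : X, ∀ g : G, F v - F u = F (g • v) - F (g • u)) :
    M.Nonempty ↔
      ((∀ g : G, ∀ u : X, F (g • u) = F u) ∧
        ∃ C : ℝ, 0 < C ∧ ∃ D : ℝ, 0 < D ∧
          ∀ u : X, F u ≥ C * dOrbit G x₀ u - D) := by
  constructor
  · intro hne
    obtain ⟨w₀, hw₀⟩ := id hne
    obtain ⟨m, rfl⟩ := P3 w₀ hw₀
    have hmin : ∀ x : X, (x : Completion X) ∈ M → ∀ u, ((F x : ℝ) : EReal) ≤ extF F u := by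
      intro x hx u
      rw [hM] at hx
      have hx' : extF F (x : Completion X) = ⨅ v : Completion X, extF F v := hx
      rw [← extF_coe F hF, hx']
      exact iInf_le _ u
    have hinf : (⨅ v : Completion X, extF F v) = ((F m : ℝ) : EReal) := by
      have h1 := hw₀
      rw [hM] at h1
      have hx' : extF F (m : Completion X) = ⨅ v : Completion X, extF F v := h1
      rw [← hx', extF_coe F hF]
    have hminX : ∀ x : X, (x : Completion X) ∈ M → ∀ u : X, F x ≤ F u := by
      intro x hx u
      have := hmin x hx u
      rw [extF_coe F hF] at this
      exact_mod_cast this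
    have hinv : ∀ g : G, ∀ u : X, F (g • u) = F u := by
      intro g u
      have h1 := P5a g m hw₀
      have h2 := hminX m hw₀ (g • m)
      have h3 := hminX _ h1 m
      have h4 := P7 m u g
      linarith
    refine ⟨hinv, ?_⟩
    have key : ∃ C : ℝ, 0 < C ∧ ∀ u : X, 1 ≤ dOrbit G m u → C * dOrbit G m u ≤ F u - F m := by
      by_contra hcon
      push Not at hcon
      have hcon' : ∀ n : ℕ, ∃ u : X, 1 ≤ dist m u ∧ (∀ g : G, dist m u ≤ dist (g • m) u) ∧
          F u - F m < 1 / ((n : ℝ) + 1) * dist m u := by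
        intro n
        obtain ⟨u, hu1, hu2⟩ := hcon (1 / ((n : ℝ) + 1)) Nat.one_div_pos_of_nat
        obtain ⟨g, hg⟩ := P6 hne m u
        refine ⟨g • u, hg ▸ hu1, fun f => ?_, ?_⟩
        · rw [← hg]; exact dOrbit_le G m u f g
        · rw [hinv, ← hg]; exact hu2
      have hv : ∀ n : ℕ, ∃ v : Completion X, ∃ u : X, dist (m : Completion X) v = 1 ∧
          (∀ g : G, dist m u ≤ dist (g • m) u) ∧ dist v (u : Completion X) = dist m u - 1 ∧
          ∃ a : ℝ, extF F v = (a : EReal) ∧ a ≤ F m + 1 / ((n : ℝ) + 1) := by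
        intro n
        obtain ⟨u, hu1, hu2, hu3⟩ := hcon' n
        obtain ⟨γ, f, h0, h1, hd, hf, -, hconv⟩ := P1 m u
        set d := dist m u with hdd
        have hdpos : 0 < d := by linarith
        have m0 : (0 : ℝ) ∈ Set.Icc (0 : ℝ) 1 := by simp
        have m1 : (1 : ℝ) ∈ Set.Icc (0 : ℝ) 1 := by simp
        have ht0 : 0 ≤ 1 / d := by positivity
        have ht1 : 1 / d ≤ 1 := by rw [div_le_one hdpos]; exact hu1
        have mt : 1 / d ∈ Set.Icc (0 : ℝ) 1 := ⟨ht0, ht1⟩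
        have f0 : f 0 = F m := by
          have := hf 0 m0
          rw [h0, extF_coe F hF] at this
          exact_mod_cast this.symm
        have f1 : f 1 = F u := by
          have := hf 1 m1
          rw [h1, extF_coe F hF] at this
          exact_mod_cast this.symm
        refine ⟨γ (1 / d), u, ?_, hu2, ?_, f (1 / d), hf _ mt, ?_⟩
        · rw [← h0, hd 0 m0 _ mt, zero_sub, abs_neg, abs_of_nonneg ht0]
          field_simp
        · rw [← h1, hd _ mt 1 m1, abs_of_nonpos (by linarith)]
          field_simp
          ring
        · have hc := hconv.2 m0 m1 (sub_nonneg.2 ht1) ht0 (by ring)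
          simp only [smul_eq_mul, mul_zero, mul_one, zero_add, f0, f1] at hc
          have h5 : 1 / d * (F u - F m) ≤ 1 / d * (1 / ((n : ℝ) + 1) * d) :=
            mul_le_mul_of_nonneg_left hu3.le ht0
          have h6 : 1 / d * (1 / ((n : ℝ) + 1) * d) = 1 / ((n : ℝ) + 1) := by
            field_simp
          linarith
      choose v u hv1 hv2 hv3 a hv4 hv5 using hv
      have hta : Tendsto a atTop (𝓝 (F m)) := by
        refine tendsto_of_tendsto_of_tendsto_of_le_of_le tendsto_const_nhds
          (h := fun n : ℕ => F m + 1 / ((n : ℝ) + 1)) ?_ ?_ hv5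
        · simpa using tendsto_const_nhds.add (tendsto_one_div_add_atTop_nhds_zero_nat (𝕜 := ℝ))
        · intro n
          have := hmin m hw₀ (v n)
          rw [hv4] at this
          exact_mod_cast this
      obtain ⟨w, hwM, σ, -, hσ⟩ := P2 v (by
        rw [hinf]
        simp only [hv4]
        exact (continuous_coe_real_ereal.tendsto _).comp hta) (by
        -- distance from base point
        refine ⟨dist (x₀ : Completion X) (m : Completion X) + 1, fun j => ?_⟩
        rw [← hv1 j]
        exact dist_triangle _ _ _)
      obtain ⟨y, rfl⟩ := P3 w hwM
      obtain ⟨g, rfl⟩ := P5b m y hw₀ hwM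
      obtain ⟨k, hk⟩ := (Metric.tendsto_nhds.1 hσ 1 one_pos).exists
      have h1 := hv2 (σ k) g
      rw [← Completion.dist_eq (g • m)] at h1
      have h2 := dist_triangle ((g • m : X) : Completion X) (v (σ k)) (u (σ k) : Completion X)
      rw [hv3, dist_comm _ (v (σ k))] at h2
      linarith
    obtain ⟨C, hC, hkey⟩ := key
    refine ⟨C, hC, C * (1 + dist x₀ m) + |F m| + 1, by positivity, fun u => ?_⟩
    obtain ⟨g, hg⟩ := P6 hne m u
    have h1 := dOrbit_le G x₀ u 1 g
    rw [one_smul] at h1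
    have h2 := dist_triangle x₀ m (g • u)
    rw [← hg] at h2
    have h3 : C * dOrbit G x₀ u ≤ C * (dist x₀ m + dOrbit G m u) :=
      mul_le_mul_of_nonneg_left (h1.trans h2) hC.le
    have h4 := neg_abs_le (F m)
    rcases le_total 1 (dOrbit G m u) with h | h
    · have := hkey u h
      linarith
    · have := hminX m hw₀ u
      have : C * dOrbit G m u ≤ C * 1 := mul_le_mul_of_nonneg_left h hC.le
      linarith
  · rintro ⟨hinv, C, hC, D, -, hprop⟩
    have : Nonempty X := ⟨x₀⟩
    have hbdd : BddBelow (Set.range F) := by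
      refine ⟨-D, ?_⟩
      rintro _ ⟨u, rfl⟩
      have := hprop u
      have := mul_nonneg hC.le (dOrbit_nonneg G x₀ u)
      linarith
    set I := ⨅ x, F x with hI
    have hle : ∀ x, I ≤ F x := fun x => ciInf_le hbdd x
    have hseq : ∀ n : ℕ, ∃ y : X, F y ≤ I + 1 / ((n : ℝ) + 1) ∧
        dist x₀ y ≤ (I + 1 + D) / C + 1 := by
      intro n
      have hn : (0 : ℝ) < 1 / ((n : ℝ) + 1) := Nat.one_div_pos_of_nat
      have hn1 : 1 / ((n : ℝ) + 1) ≤ 1 := by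
        rw [div_le_one (by positivity)]
        have : (0 : ℝ) ≤ n := Nat.cast_nonneg n
        linarith
      obtain ⟨u, hu⟩ := exists_lt_of_ciInf_lt (show (⨅ x, F x) < I + 1 / ((n : ℝ) + 1) by linarith)
      obtain ⟨p, hp⟩ := exists_lt_of_ciInf_lt
        (show (⨅ p : G × G, dist (p.1 • x₀) (p.2 • u)) < dOrbit G x₀ u + 1 from
          lt_add_one (dOrbit G x₀ u))
      refine ⟨p.1⁻¹ • p.2 • u, ?_, ?_⟩
      · rw [hinv, hinv]; exact hu.le
      · have h1 := (P4 p.1).dist_eq x₀ (p.1⁻¹ • p.2 • u)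
        simp only [smul_inv_smul] at h1
        have h2 := hprop u
        have h3 : dOrbit G x₀ u ≤ (I + 1 + D) / C := by
          rw [le_div_iff₀ hC]
          linarith
        linarith
    choose y hy1 hy2 using hseq
    have hta : Tendsto (fun n => F (y n)) atTop (𝓝 I) := by
      refine tendsto_of_tendsto_of_tendsto_of_le_of_le tendsto_const_nhds
        (h := fun n : ℕ => I + 1 / ((n : ℝ) + 1)) ?_ (fun n => hle _) hy1
      simpa using tendsto_const_nhds.add (tendsto_one_div_add_atTop_nhds_zero_nat (𝕜 := ℝ))
    have htb : Tendsto (fun n => extF F (y n : Completion X)) atTop (𝓝 (I : EReal)) := by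
      simp only [extF_coe F hF]
      exact (continuous_coe_real_ereal.tendsto _).comp hta
    have hinf : (⨅ v : Completion X, extF F v) = (I : EReal) := by
      apply le_antisymm
      · exact ge_of_tendsto' htb fun n => iInf_le _ _
      · exact le_iInf fun u => le_extF F I hle u
    obtain ⟨w, hw, -⟩ := P2 (fun n => (y n : Completion X)) (by rw [hinf]; exact htb)
      ⟨_, fun j => by rw [Completion.dist_eq]; exact hy2 j⟩
    exact ⟨w, hw⟩
end

section
/- Let (ℛ, d) be a metric space with a distinguished point 0, with metric completion (ℛ̄, d), let F : ℛ → ℝ be lower semicontinuous, and let F̄ : ℛ̄ → ℝ ∪ {+∞} be its greatest lsc extension, F̄(u) = sup_{ε>0} inf { F(v) : v ∈ ℛ, d(u,v) ≤ ε }. Let ℳ = { u ∈ ℛ̄ : F̄(u) = inf_{ℛ̄} F̄ }, let G be a group acting on ℛ by d-isometries, and set d_G(Gu, Gv) := inf_{f,g ∈ G} d(f.u, g.v). Assume F is G-invariant, that there exist C, D > 0 with F(u) ≥ C · d_G(G0, Gu) − D for all u ∈ ℛ, and that every sequence φ_j ∈ ℛ̄ with F̄(φ_j) → inf_{ℛ̄}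 F̄ and d(0, φ_j) bounded has a subsequence d-converging to some element of ℳ. Then ℳ is nonempty. -/
open UniformSpace Filter Topology

/-- If `F` is `G`-invariant and proper with respect to the orbit pseudometric, and minimizing
sequences at bounded distance from the base point subconverge to minimizers, then the set of
minimizers of the greatest lsc extension of `F` on the metric completion is nonempty. -/
theorem stmt_11 {X : Type*} [MetricSpace X] (x₀ : X)
    (G : Type*) [Group G] [MulAction G X]
    (F : X → ℝ) (hF : LowerSemicontinuous F)
    (M : Set (Completion X))
    (hM : M = {u : Completion X | extF F u = ⨅ v : Completion X, extF F v})
    (hiso : ∀ g : G, Isometry (fun x : X => g • x))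
    (hinv : ∀ g : G, ∀ u : X, F (g • u) = F u)
    (hproper : ∃ C : ℝ, 0 < C ∧ ∃ D : ℝ, 0 < D ∧
      ∀ u : X, F u ≥ C * dOrbit G x₀ u - D)
    (hcpt : ∀ φ : ℕ → Completion X,
      Tendsto (fun j => extF F (φ j)) atTop (𝓝 (⨅ v : Completion X, extF F v)) →
      (∃ C : ℝ, ∀ j, dist ((x₀ : Completion X)) (φ j) ≤ C) →
      ∃ u ∈ M, ∃ σ : ℕ → ℕ, StrictMono σ ∧ Tendsto (fun k => φ (σ k)) atTop (𝓝 u)) :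
    M.Nonempty := by
  obtain ⟨C, hC, D, hD, hp⟩ := hproper
  have hd0 : ∀ u : X, 0 ≤ dOrbit G x₀ u := fun u => Real.iInf_nonneg fun p => dist_nonneg
  have hbdd : BddBelow (Set.range F) := by
    refine ⟨-D, ?_⟩
    rintro _ ⟨u, rfl⟩
    have h1 := hp u
    have h2 := mul_nonneg hC.le (hd0 u)
    linarith
  haveI : Nonempty X := ⟨x₀⟩
  set m : ℝ := ⨅ u, F u with hm
  have hmle : ∀ u, m ≤ F u := fun u => ciInf_le hbdd u
  have hle : ∀ v : X, extF F (v : Completion X) ≤ (F v : EReal) := by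
    intro v
    unfold extF
    refine iSup₂_le fun ε hε => iInf₂_le_of_le v ?_ le_rfl
    simpa using hε.le
  have hge : ∀ u : Completion X, (m : EReal) ≤ extF F u := by
    intro u
    unfold extF
    refine le_iSup₂_of_le (1 : ℝ) one_pos (le_iInf₂ fun v _ => ?_)
    exact_mod_cast hmle v
  have hex : ∀ j : ℕ, ∃ w : X, F w < m + 1 / ((j : ℝ) + 1) ∧
      dist x₀ w ≤ (m + 1 + D) / C + 1 := by
    intro j
    have hj : (0 : ℝ) < 1 / ((j : ℝ) + 1) := Nat.one_div_pos_of_nat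
    obtain ⟨u, hu⟩ := exists_lt_of_ciInf_lt (show (⨅ u, F u) < m + 1 / ((j : ℝ) + 1) by linarith)
    obtain ⟨⟨f, g⟩, hfg⟩ := exists_lt_of_ciInf_lt
      (show (⨅ p : G × G, dist (p.1 • x₀) (p.2 • u)) < dOrbit G x₀ u + 1 by
        change dOrbit G x₀ u < _; linarith)
    refine ⟨f⁻¹ • g • u, by rw [hinv, hinv]; exact hu, ?_⟩
    have h1 : dist x₀ (f⁻¹ • g • u) = dist (f • x₀) (g • u) := by
      have := (hiso f).dist_eq x₀ (f⁻¹ • g • u)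
      simp only [smul_inv_smul] at this
      exact this.symm
    have h2 : dOrbit G x₀ u ≤ (m + 1 + D) / C := by
      rw [le_div_iff₀ hC]
      have h3 := hp u
      have h4 : 1 / ((j : ℝ) + 1) ≤ 1 := by
        rw [div_le_one (by positivity)]
        have : (0 : ℝ) ≤ j := j.cast_nonneg
        linarith
      linarith [mul_comm C (dOrbit G x₀ u)]
    rw [h1]
    simp only at hfg
    linarith
  choose w hw hwd using hex
  have hT : Tendsto (fun j => (F (w j) : EReal)) atTop (𝓝 (m : EReal)) := by
    refine (continuous_coe_real_ereal.tendsto m).comp ?_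
    refine tendsto_of_tendsto_of_tendsto_of_le_of_le tendsto_const_nhds ?_
      (fun j => hmle (w j)) (fun j => (hw j).le)
    simpa using tendsto_one_div_add_atTop_nhds_zero_nat.const_add m
  have hinf : (⨅ v : Completion X, extF F v) = (m : EReal) := by
    refine le_antisymm ?_ (le_iInf hge)
    exact ge_of_tendsto' hT fun j => (iInf_le _ _).trans (hle (w j))
  obtain ⟨u, hu, -⟩ := hcpt (fun j => (w j : Completion X)) (by
    rw [hinf]
    exact tendsto_of_tendsto_of_tendsto_of_le_of_le tendsto_const_nhds hT
      (fun j => hge _) (fun j => hle _))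
    ⟨_, fun j => by rw [Completion.dist_eq]; exact hwd j⟩
  exact ⟨u, hu⟩
end
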